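/- arXiv:2501.13771 — 2 statements merged into one kernel-verified Lean document; each statement's English description precedes it below -/
import Mathlib

section
/- Let 0 < s < 1 and let b₁, b₂ ∈ ℕ. Then there exists ε₀ > 0 such that for every ε ∈ (0, ε₀) there is a constant C > 0 (depending on s, b₁, b₂, ε) such that for all x, v ∈ ℝ: |∬_{ℝ²} ξ^{b₁} η^{b₂} e^{−M(ξ,η)} e^{−i(ξx+ηv)} dξ dη| ≤ C · ⟨(x,v)⟩^{−(2+2s−2ε)} · ⟨x⟩^{−(ε+b₁)} · ⟨v⟩^{−(ε+b₂)}. (This double integral equals, up to a sign, the derivative ∂_x^{b₁}∂_v^{b₂} of the time-one fundamental solution K(1,x,v) = ∬_{ℝ²} e^{−M(ξ,η)} e^{−i(ξx+ηv)} dξ dη of the fractional Fokker–Planck equation, written in the variables (x, v) dual to (ξ, η).) -/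
open MeasureTheory Real

/-- `M(ξ,η) = ∫₀¹ |(ξ−η)τ + η|^{2s} dτ`. -/
noncomputable def Mker (s ξ η : ℝ) : ℝ := ∫ τ in (0:ℝ)..1, |(ξ - η) * τ + η| ^ (2 * s)

/-!
On a quadrant of the plane, `M` is the restriction of a function holomorphic in each variable: of
`∫₀¹ ((a - c) τ + c)^{2s} dτ` when the signs of `ξ` and `η` agree, and of
`(a^{1+2s} + c^{1+2s}) / ((1+2s) (a + c))` when they differ, where `a = |ξ|` and `c = |η|`. On thin
sectors the real parts of both grow like `|a|^{2s} + |c|^{2s}`, so the contours may be moved. For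
`|x| ≥ |v|`, rotating the ray of `c` produces the decay in `v`. Shifting the half-line of `a` by
`∓i` gains `e^{-|x|}` and leaves a vertical segment at the origin; the two segments coming from
`ξ > 0` and `ξ < 0` nearly cancel, because there the two continuations differ only by the branch of
`a^{1+2s} / (a + c)`. What is left is the Laplace transform of a function of size
`t^{b₁} min (t^{1+2s} / |c|) (t^{2s})`, hence is `O (|x|^{-(b₁+1+2s)} min (1 / (|x| |c|)) 1)`, and
integrating this over `c`, with a factor `|c|^{-ε}` spent on the decay in `v`, gives
`|x|^{-(b₁+2+2s-ε)} (1 + |v|)^{-(b₂+ε)}`. The case `|v| ≥ |x|` follows from the symmetry of `M`.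
-/

section

open Set Filter
open Complex (I)
open scoped Topology Interval

section ContourShift

variable {g : ℂ → ℂ} {B : ℝ → ℝ} {θ h : ℝ}

lemma norm_integral_vertical_le {T C : ℝ} (hC : ∀ y ∈ [[0, h]], ‖g (T + y * I)‖ ≤ C) :
    ‖∫ y in (0 : ℝ)..h, g (T + y * I)‖ ≤ C * |h| := by
  have := intervalIntegral.norm_integral_le_of_norm_le_const fun y hy ↦ hC y (uIoc_subset_uIcc hy)
  rwa [sub_zero] at this

lemma integral_eq_integral_add_mul_I (hg : DifferentiableOn ℂ g {z | z.im ∈ [[0, h]]})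
    (hB : ∀ z : ℂ, z.im ∈ [[0, h]] → ‖g z‖ ≤ B z.re) (hBi : Integrable B)
    (hBtop : Tendsto B atTop (𝓝 0)) (hBbot : Tendsto B atBot (𝓝 0)) :
    ∫ t : ℝ, g t = ∫ t : ℝ, g (t + h * I) := by
  have integrable_line (y : ℝ) (hy : y ∈ [[0, h]]) : Integrable fun t : ℝ ↦ g (t + y * I) := by
    have hc : Continuous fun t : ℝ ↦ g (t + y * I) :=
      hg.continuousOn.comp_continuous (by fun_prop) fun t ↦ by simpa using hy
    exact hBi.mono' hc.aestronglyMeasurable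
      (.of_forall fun t ↦ by simpa using hB (t + y * I) (by simpa using hy))
  have vertical_side {l : Filter ℝ} (hl : Tendsto B l (𝓝 0)) :
      Tendsto (fun T : ℝ ↦ I * ∫ y in (0 : ℝ)..h, g (T + y * I)) l (𝓝 0) := by
    have hbound (T : ℝ) : ‖∫ y in (0 : ℝ)..h, g (T + y * I)‖ ≤ B T * |h| :=
      norm_integral_vertical_le fun y hy ↦ by simpa using hB (T + y * I) (by simpa using hy)
    simpa using (squeeze_zero_norm hbound (by simpa using hl.mul_const |h|)).const_mul I
  have cauchy (T : ℝ) : (∫ t in -T..T, g t) - (∫ t in -T..T, g (t + h * I))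
      + I * (∫ y in (0 : ℝ)..h, g (T + y * I))
      - I * (∫ y in (0 : ℝ)..h, g ((-T : ℝ) + y * I)) = 0 := by
    simpa using Complex.integral_boundary_rect_eq_zero_of_differentiableOn g (-T : ℝ) (T + h * I)
      (hg.mono fun z hz ↦ by simpa using hz.2)
  have base : Integrable fun t : ℝ ↦ g t := by simpa using integrable_line 0 left_mem_uIcc
  have bottom := intervalIntegral_tendsto_integral base tendsto_neg_atTop_atBot tendsto_id
  have top := intervalIntegral_tendsto_integral (integrable_line h right_mem_uIcc)
    tendsto_neg_atTop_atBot tendsto_id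
  have limit := ((bottom.sub top).add (vertical_side hBtop)).sub
    ((vertical_side hBbot).comp tendsto_neg_atTop_atBot)
  have := tendsto_nhds_unique (limit.congr cauchy) tendsto_const_nhds
  linear_combination this

lemma integral_Ioi_eq_integral_Ioi_add_mul_I
    (hc : ContinuousOn g {z | 0 ≤ z.re ∧ z.im ∈ [[0, h]]})
    (hd : DifferentiableOn ℂ g {z | 0 < z.re ∧ z.im ∈ [[0, h]]})
    (hB : ∀ z : ℂ, 0 ≤ z.re → z.im ∈ [[0, h]] → ‖g z‖ ≤ B z.re)
    (hBi : IntegrableOn B (Ioi 0)) (hBtop : Tendsto B atTop (𝓝 0)) :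
    ∫ t in Ioi (0 : ℝ), g t =
      (∫ t in Ioi (0 : ℝ), g (t + h * I)) + I * ∫ y in (0 : ℝ)..h, g (y * I) := by
  have integrable_line (y : ℝ) (hy : y ∈ [[0, h]]) :
      IntegrableOn (fun t : ℝ ↦ g (t + y * I)) (Ioi 0) := by
    have hcy : ContinuousOn (fun t : ℝ ↦ g (t + y * I)) (Ioi 0) :=
      hc.comp (by fun_prop) fun t ht ↦ by simpa [(mem_Ioi.1 ht).le] using hy
    refine hBi.mono' (hcy.aestronglyMeasurable measurableSet_Ioi) ?_
    refine (ae_restrict_iff' measurableSet_Ioi).2 (.of_forall fun t ht ↦ ?_)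
    simpa using hB (t + y * I) (by simpa using (mem_Ioi.1 ht).le) (by simpa using hy)
  have vertical_side : Tendsto (fun T : ℝ ↦ I * ∫ y in (0 : ℝ)..h, g (T + y * I)) atTop (𝓝 0) := by
    have hbound : ∀ᶠ T : ℝ in atTop, ‖∫ y in (0 : ℝ)..h, g (T + y * I)‖ ≤ B T * |h| := by
      filter_upwards [eventually_ge_atTop 0] with T hT
      exact norm_integral_vertical_le fun y hy ↦ by
        simpa using hB (T + y * I) (by simpa using hT) (by simpa using hy)
    simpa using (squeeze_zero_norm' hbound (by simpa using hBtop.mul_const |h|)).const_mul I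
  have cauchy : ∀ᶠ T : ℝ in atTop, (∫ t in 0..T, g t) - (∫ t in 0..T, g (t + h * I))
      + I * (∫ y in (0 : ℝ)..h, g (T + y * I)) = I * ∫ y in (0 : ℝ)..h, g (y * I) := by
    filter_upwards [eventually_ge_atTop 0] with T hT
    have := Complex.integral_boundary_rect_eq_zero_of_continuousOn_of_differentiableOn g 0
      (T + h * I)
      (hc.mono fun z hz ↦ ⟨(by simpa [hT] using hz.1 : _ ∧ _).1, by simpa using hz.2⟩)
      (hd.mono fun z hz ↦ ⟨(by simpa [hT] using hz.1 : _ ∧ _).1,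
        Ioo_subset_Icc_self (by simpa using hz.2)⟩)
    simpa [sub_eq_zero] using this
  have base : IntegrableOn (fun t : ℝ ↦ g t) (Ioi 0) := by
    simpa using integrable_line 0 left_mem_uIcc
  have limit := ((intervalIntegral_tendsto_integral_Ioi 0 base tendsto_id).sub
    (intervalIntegral_tendsto_integral_Ioi 0 (integrable_line h right_mem_uIcc) tendsto_id)).add
    vertical_side
  have := tendsto_nhds_unique (limit.congr' cauchy) tendsto_const_nhds
  linear_combination this

lemma integral_exp_smul_comp_exp {E : Type*} [NormedAddCommGroup E] [NormedSpace ℝ E]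
    (f : ℝ → E) : ∫ u : ℝ, rexp u • f (rexp u) = ∫ r in Ioi (0 : ℝ), f r := by
  simpa [image_univ, range_exp] using
    (integral_image_eq_integral_abs_deriv_smul MeasurableSet.univ
      (fun u _ ↦ (hasDerivAt_exp u).hasDerivWithinAt) exp_injective.injOn f).symm

lemma integrable_exp_smul_comp_exp_iff {E : Type*} [NormedAddCommGroup E] [NormedSpace ℝ E]
    {f : ℝ → E} : Integrable (fun u : ℝ ↦ rexp u • f (rexp u)) ↔ IntegrableOn f (Ioi 0) := by
  simpa [image_univ, range_exp] using
    (integrableOn_image_iff_integrableOn_abs_deriv_smul MeasurableSet.univ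
      (fun u _ ↦ (hasDerivAt_exp u).hasDerivWithinAt) exp_injective.injOn f).symm

lemma integral_Ioi_eq_exp_mul_integral_ray
    (hg : ∀ r > (0 : ℝ), ∀ φ ∈ [[0, θ]], DifferentiableAt ℂ g (r * Complex.exp (φ * I)))
    (hB : ∀ r > (0 : ℝ), ∀ φ ∈ [[0, θ]], ‖g (r * Complex.exp (φ * I))‖ ≤ B r)
    (hBi : IntegrableOn B (Ioi 0)) (hBtop : Tendsto (fun r ↦ r * B r) atTop (𝓝 0))
    (hBzero : Tendsto (fun r ↦ r * B r) (𝓝[>] 0) (𝓝 0)) :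
    ∫ r in Ioi (0 : ℝ), g r =
      Complex.exp (θ * I) * ∫ r in Ioi (0 : ℝ), g (r * Complex.exp (θ * I)) := by
  have exp_eq (w : ℂ) : Complex.exp w = (rexp w.re : ℝ) * Complex.exp (w.im * I) := by
    rw [Complex.ofReal_exp, ← Complex.exp_add, Complex.re_add_im]
  have shift : ∫ u : ℝ, Complex.exp u * g (Complex.exp u) =
      ∫ u : ℝ, Complex.exp (u + θ * I) * g (Complex.exp (u + θ * I)) := by
    refine integral_eq_integral_add_mul_I (g := fun w ↦ Complex.exp w * g (Complex.exp w))
      (B := fun u ↦ rexp u * B (rexp u)) (fun w hw ↦ ?_) (fun w hw ↦ ?_)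
      (by simpa using integrable_exp_smul_comp_exp_iff.2 hBi) (hBtop.comp tendsto_exp_atTop)
      (hBzero.comp tendsto_exp_atBot_nhdsGT)
    · have : DifferentiableAt ℂ g (Complex.exp w) := by
        simpa only [exp_eq w] using hg _ (exp_pos w.re) w.im hw
      exact (Complex.differentiableAt_exp.mul
        (this.comp w Complex.differentiableAt_exp)).differentiableWithinAt
    · rw [norm_mul, Complex.norm_exp, exp_eq w]
      gcongr
      exact hB _ (exp_pos w.re) w.im hw
  rw [← integral_exp_smul_comp_exp, ← integral_exp_smul_comp_exp, ← integral_const_mul]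
  simpa [Complex.exp_add, mul_assoc, mul_left_comm] using shift

end ContourShift

section Reflection

variable {α F : Type*} [MeasurableSpace α] [NormedAddCommGroup F] {μ : Measure α} {T : α → α}
  {S : Set α} {f : α → F}

lemma integrableOn_compl_of_reflection (hT : MeasurePreserving T μ μ) (hTe : MeasurableEmbedding T)
    (hTS : T ⁻¹' Sᶜ =ᵐ[μ] S) (hfT : IntegrableOn (f ∘ T) S μ) : IntegrableOn f Sᶜ μ :=
  (hT.integrableOn_comp_preimage hTe).1 ((integrableOn_congr_set_ae hTS).2 hfT)

lemma integrable_of_reflection (hT : MeasurePreserving T μ μ) (hTe : MeasurableEmbedding T)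
    (hTS : T ⁻¹' Sᶜ =ᵐ[μ] S) (hf : IntegrableOn f S μ) (hfT : IntegrableOn (f ∘ T) S μ) :
    Integrable f μ := by
  rw [← integrableOn_univ, ← union_compl_self S]
  exact hf.union (integrableOn_compl_of_reflection hT hTe hTS hfT)

lemma integral_eq_add_integral_reflection [NormedSpace ℝ F] (hT : MeasurePreserving T μ μ)
    (hTe : MeasurableEmbedding T) (hS : MeasurableSet S) (hTS : T ⁻¹' Sᶜ =ᵐ[μ] S)
    (hf : IntegrableOn f S μ) (hfT : IntegrableOn (f ∘ T) S μ) :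
    ∫ p, f p ∂μ = (∫ p in S, f p ∂μ) + ∫ p in S, f (T p) ∂μ := by
  rw [← integral_add_compl hS (integrable_of_reflection hT hTe hTS hf hfT),
    ← hT.setIntegral_preimage_emb hTe f Sᶜ, setIntegral_congr_set hTS]

end Reflection

section StretchedExponential

open Polynomial

variable {κ q : ℝ}

lemma integrableOn_eval_mul_exp_neg_mul_rpow (p : ℝ[X]) (hκ : 0 < κ) (hq : 0 < q) :
    IntegrableOn (fun t : ℝ ↦ p.eval t * rexp (-κ * t ^ q)) (Ioi 0) := by
  induction p using Polynomial.induction_on' with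
  | add p₁ p₂ h₁ h₂ =>
    simp only [eval_add, add_mul]
    exact h₁.add h₂
  | monomial n a =>
    have := integrableOn_rpow_mul_exp_neg_mul_rpow (s := n)
      (by linarith [n.cast_nonneg (α := ℝ)]) hq hκ
    simpa [IntegrableOn, mul_assoc] using this.const_mul a

lemma tendsto_eval_mul_exp_neg_mul_rpow_atTop (p : ℝ[X]) (hκ : 0 < κ) (hq : 0 < q) :
    Tendsto (fun t : ℝ ↦ p.eval t * rexp (-κ * t ^ q)) atTop (𝓝 0) := by
  induction p using Polynomial.induction_on' with
  | add p₁ p₂ h₁ h₂ => simpa [add_mul] using h₁.add h₂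
  | monomial n a =>
    have := ((tendsto_rpow_mul_exp_neg_mul_atTop_nhds_zero (n / q) κ hκ).comp
      (tendsto_rpow_atTop hq)).const_mul a
    rw [mul_zero] at this
    refine this.congr' ?_
    filter_upwards [eventually_gt_atTop 0] with t ht
    simp [← rpow_mul ht.le, mul_div_cancel₀ _ hq.ne', mul_assoc]

lemma integrableOn_pow_mul_exp (hκ : 0 < κ) (hq : 0 < q) (n : ℕ) :
    IntegrableOn (fun t : ℝ ↦ t ^ n * rexp (-κ * t ^ q)) (Ioi 0) := by
  simpa using integrableOn_eval_mul_exp_neg_mul_rpow (X ^ n) hκ hq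

lemma tendsto_pow_mul_exp (hκ : 0 < κ) (hq : 0 < q) (n : ℕ) :
    Tendsto (fun t : ℝ ↦ t ^ n * rexp (-κ * t ^ q)) atTop (𝓝 0) := by
  simpa using tendsto_eval_mul_exp_neg_mul_rpow_atTop (X ^ n) hκ hq

lemma integrableOn_add_one_pow_mul_exp (hκ : 0 < κ) (hq : 0 < q) (b : ℕ) :
    IntegrableOn (fun t : ℝ ↦ (t + 1) ^ b * rexp (-κ * t ^ q)) (Ioi 0) := by
  have := integrableOn_eval_mul_exp_neg_mul_rpow ((X + 1 : ℝ[X]) ^ b) hκ hq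
  simpa using this

lemma tendsto_add_one_pow_mul_exp (hκ : 0 < κ) (hq : 0 < q) (b : ℕ) :
    Tendsto (fun t : ℝ ↦ (t + 1) ^ b * rexp (-κ * t ^ q)) atTop (𝓝 0) := by
  have := tendsto_eval_mul_exp_neg_mul_rpow_atTop ((X + 1 : ℝ[X]) ^ b) hκ hq
  simpa using this

end StretchedExponential

section Cone

/-- The closed sector of slope `δ` about the positive real axis, without its vertex: the domain of
the variable whose contour is rotated. -/
def cone (δ : ℝ) : Set ℂ := {z | 0 < z.re ∧ |z.im| ≤ δ * z.re}

/-- The sector of slope `δ` thickened by `1` in the imaginary direction: it contains `cone δ`, the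
half-strip of width `1` about the positive real axis, and the sums of their points. -/
def thickCone (δ : ℝ) : Set ℂ := {z | 0 ≤ z.re ∧ |z.im| ≤ 1 + δ * z.re}

variable {δ q : ℝ} {w z : ℂ}

lemma cone_subset_thickCone : cone δ ⊆ thickCone δ :=
  fun _ hz ↦ ⟨hz.1.le, hz.2.trans (by linarith)⟩

lemma add_mem_thickCone (hz : z ∈ thickCone δ) (hw : w ∈ cone δ) : z + w ∈ thickCone δ := by
  refine ⟨add_nonneg hz.1 hw.1.le, (abs_add_le _ _).trans ?_⟩
  rw [Complex.add_re]
  linarith [hz.2, hw.2]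

lemma norm_le_two_mul_re (hδ : δ ≤ 1) (hz : z ∈ cone δ) : ‖z‖ ≤ 2 * z.re := by
  have := Complex.norm_le_abs_re_add_abs_im z
  rw [abs_of_pos hz.1] at this
  nlinarith [hz.1, hz.2]

lemma half_le_cos {x : ℝ} (hx : |x| ≤ 1) : 1 / 2 ≤ cos x := by
  have := one_sub_sq_div_two_le_cos (x := x)
  nlinarith [sq_abs x, abs_nonneg x]

lemma abs_arg_le_of_abs_im_le {k : ℝ} (hz : 0 < z.re) (hk : |z.im| ≤ k * z.re) : |z.arg| ≤ k := by
  have : 0 ≤ k := nonneg_of_mul_nonneg_left ((abs_nonneg _).trans hk) hz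
  have htan : tan |z.arg| ≤ k := by
    have habs : tan |z.arg| = |z.im| / z.re := by
      rcases abs_cases z.arg with ⟨h, hs⟩ | ⟨h, hs⟩
      · rw [h, Complex.tan_arg, abs_of_nonneg (Complex.arg_nonneg_iff.1 hs)]
      · rw [h, tan_neg, Complex.tan_arg, abs_of_neg (Complex.arg_neg_iff.1 hs), neg_div]
    rwa [habs, div_le_iff₀ hz]
  exact (le_tan (abs_nonneg _) (Complex.abs_arg_lt_pi_div_two_iff.2 (.inl hz))).trans htan

lemma abs_arg_le_of_mem_thickCone (hz : z ∈ thickCone δ) (hδ : 0 < δ) (hfar : 1 ≤ δ * z.re) :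
    |z.arg| ≤ 2 * δ :=
  abs_arg_le_of_abs_im_le (pos_of_mul_pos_right (one_pos.trans_le hfar) hδ.le) (by linarith [hz.2])

lemma norm_le_of_mem_thickCone (hz : z ∈ thickCone δ) (hδ : 0 < δ) (hnear : δ * z.re < 1) :
    ‖z‖ ≤ 2 + 1 / δ := by
  have hre : z.re ≤ 1 / δ := by rw [le_div_iff₀ hδ]; linarith
  have := Complex.norm_le_abs_re_add_abs_im z
  rw [abs_of_nonneg hz.1] at this
  linarith [hz.2]

lemma re_cpow_ge (hq : 0 ≤ q) (hδ : 0 < δ) (hδq : 2 * δ * q ≤ 1) (hz : z ∈ thickCone δ) :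
    ‖z‖ ^ q / 2 - 2 * (2 + 1 / δ) ^ q ≤ (z ^ (q : ℂ)).re := by
  rw [Complex.cpow_ofReal_re]
  have hpos : 0 ≤ ‖z‖ ^ q := by positivity
  rcases le_or_gt 1 (δ * z.re) with hfar | hnear
  · have harg : |z.arg * q| ≤ 1 := by
      rw [abs_mul, abs_of_nonneg hq]
      nlinarith [abs_arg_le_of_mem_thickCone hz hδ hfar]
    have : 0 ≤ (2 + 1 / δ) ^ q := by positivity
    nlinarith [half_le_cos harg]
  · have : ‖z‖ ^ q ≤ (2 + 1 / δ) ^ q :=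
      rpow_le_rpow (norm_nonneg z) (norm_le_of_mem_thickCone hz hδ hnear) hq
    nlinarith [neg_one_le_cos (z.arg * q)]

lemma re_cpow_div_eq (hz : z ≠ 0) :
    (z ^ (q : ℂ) / w).re = ‖z‖ ^ q / ‖w‖ * cos (z.arg * q - w.arg) := by
  have hpolar : z ^ (q : ℂ) / w =
      (‖z‖ ^ q / ‖w‖ : ℝ) * Complex.exp ((z.arg * q - w.arg : ℝ) * I) := by
    conv_lhs => rw [← Complex.norm_mul_exp_arg_mul_I w]
    rw [Complex.cpow_def_of_ne_zero hz, Complex.log, add_mul, Complex.exp_add,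
      Complex.ofReal_sub, sub_mul, Complex.exp_sub, Complex.ofReal_div, ← Complex.ofReal_mul,
      ← Complex.ofReal_exp, ← rpow_def_of_pos (norm_pos_iff.2 hz), Complex.ofReal_mul]
    ring_nf
  rw [hpolar, Complex.re_ofReal_mul, Complex.exp_ofReal_mul_I_re]

lemma re_cpow_one_add_div_ge (hq : 0 ≤ q) (hδ : 0 < δ) (hδq : 2 * δ * (2 + q) ≤ 1)
    (hz : z ∈ thickCone δ) (hw : w ∈ thickCone δ) (hw0 : w ≠ 0) (hre : z.re ≤ w.re)
    (hnorm : ‖z‖ ≤ 3 * ‖w‖) :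
    ‖z‖ ^ (1 + q) / ‖w‖ / 2 - 6 * (2 + 1 / δ) ^ q ≤ (z ^ ((1 + q : ℝ) : ℂ) / w).re := by
  rcases eq_or_ne z 0 with rfl | hz0
  · have : (1 + q) ≠ 0 := by positivity
    have h : ((1 + q : ℝ) : ℂ) ≠ 0 := by exact_mod_cast this
    rw [Complex.zero_cpow h, norm_zero, zero_rpow this]
    simp only [zero_div, Complex.zero_re, zero_sub, Left.neg_nonpos_iff]
    positivity
  have hw' : 0 < ‖w‖ := norm_pos_iff.2 hw0
  have hpos : 0 ≤ ‖z‖ ^ (1 + q) / ‖w‖ := by positivity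
  rw [re_cpow_div_eq hz0]
  rcases le_or_gt 1 (δ * z.re) with hfar | hnear
  · have harg : |z.arg * (1 + q) - w.arg| ≤ 1 := by
      refine (abs_sub _ _).trans ?_
      rw [abs_mul, abs_of_nonneg (by positivity : 0 ≤ 1 + q)]
      have hfar' : 1 ≤ δ * w.re := hfar.trans (by gcongr)
      nlinarith [abs_arg_le_of_mem_thickCone hz hδ hfar, abs_arg_le_of_mem_thickCone hw hδ hfar']
    have : 0 ≤ (2 + 1 / δ) ^ q := by positivity
    nlinarith [half_le_cos harg]
  · have : ‖z‖ ^ (1 + q) / ‖w‖ ≤ 3 * (2 + 1 / δ) ^ q := by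
      rw [rpow_add (norm_pos_iff.2 hz0), rpow_one, div_le_iff₀ hw']
      have : ‖z‖ ^ q ≤ (2 + 1 / δ) ^ q :=
        rpow_le_rpow (norm_nonneg z) (norm_le_of_mem_thickCone hz hδ hnear) hq
      calc ‖z‖ * ‖z‖ ^ q ≤ 3 * ‖w‖ * (2 + 1 / δ) ^ q := by gcongr
        _ = 3 * (2 + 1 / δ) ^ q * ‖w‖ := by ring
    nlinarith [neg_one_le_cos (z.arg * (1 + q) - w.arg)]

end Cone

section Phase

variable {q δ : ℝ} {a c : ℂ}

/-- The analytic continuation of `M` from the quadrants where its arguments have equal signs: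
`samePhase (2s) ξ η = M(ξ, η)` for `ξ, η > 0`. -/
noncomputable def samePhase (q : ℝ) (a c : ℂ) : ℂ :=
  ∫ τ in (0 : ℝ)..1, ((a - c) * τ + c) ^ (q : ℂ)

/-- The analytic continuation of `M` from the quadrants where its arguments have opposite signs,
written with the absolute values of the arguments: `oppositePhase (2s) ξ η = M(-ξ, η)` for
`ξ, η > 0`. -/
noncomputable def oppositePhase (q : ℝ) (a c : ℂ) : ℂ :=
  (a ^ ((1 + q : ℝ) : ℂ) + c ^ ((1 + q : ℝ) : ℂ)) / (((1 + q : ℝ) : ℂ) * (a + c))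

lemma continuousOn_cpow_const (hq : 0 < q) :
    ContinuousOn (fun z : ℂ ↦ z ^ (q : ℂ)) {z | 0 ≤ z.re} := fun _ hz ↦
  (Complex.continuousAt_cpow_const_of_re_pos (.inl hz) (by simpa using hq)).continuousWithinAt

lemma re_segment (a c : ℂ) (τ : ℝ) : ((a - c) * τ + c).re = a.re * τ + c.re * (1 - τ) := by
  simp only [Complex.add_re, Complex.re_mul_ofReal, Complex.sub_re]
  ring

lemma re_segment_nonneg (ha : 0 ≤ a.re) (hc : 0 ≤ c.re) {τ : ℝ} (hτ : τ ∈ Icc (0 : ℝ) 1) :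
    0 ≤ ((a - c) * τ + c).re := by
  rw [re_segment]
  exact add_nonneg (mul_nonneg ha hτ.1) (mul_nonneg hc (sub_nonneg.2 hτ.2))

lemma continuousOn_segment_cpow (hq : 0 < q) (ha : 0 ≤ a.re) (hc : 0 ≤ c.re) :
    ContinuousOn (fun τ : ℝ ↦ ((a - c) * τ + c) ^ (q : ℂ)) (Icc 0 1) :=
  (continuousOn_cpow_const hq).comp (f := fun τ : ℝ ↦ (a - c) * τ + c) (by fun_prop)
    fun _ hτ ↦ re_segment_nonneg ha hc hτ

lemma samePhase_comm (q : ℝ) (a c : ℂ) : samePhase q a c = samePhase q c a := by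
  have := intervalIntegral.integral_comp_sub_left
    (fun τ : ℝ ↦ ((c - a) * τ + a) ^ (q : ℂ)) (a := 0) (b := 1) 1
  rw [sub_self, sub_zero] at this
  rw [samePhase, samePhase, ← this]
  refine intervalIntegral.integral_congr fun τ _ ↦ ?_
  push_cast
  ring_nf

lemma oppositePhase_comm (q : ℝ) (a c : ℂ) : oppositePhase q a c = oppositePhase q c a := by
  rw [oppositePhase, oppositePhase, add_comm, add_comm a c]

lemma samePhase_of_ne (hq : 0 < q) (ha : 0 ≤ a.re) (hc : 0 < c.re) (hac : a ≠ c) :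
    samePhase q a c =
      (a ^ ((1 + q : ℝ) : ℂ) - c ^ ((1 + q : ℝ) : ℂ)) / (((1 + q : ℝ) : ℂ) * (a - c)) := by
  have hq1 : ((1 + q : ℝ) : ℂ) ≠ 0 := by exact_mod_cast (by positivity : 1 + q ≠ 0)
  have hac' : a - c ≠ 0 := sub_ne_zero.2 hac
  have hderiv (τ : ℝ) (hτ : τ ∈ Ioo (0 : ℝ) 1) : HasDerivAt
      (fun τ : ℝ ↦ ((a - c) * τ + c) ^ ((1 + q : ℝ) : ℂ) / (((1 + q : ℝ) : ℂ) * (a - c)))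
      (((a - c) * τ + c) ^ (q : ℂ)) τ := by
    have hre : 0 < ((a - c) * τ + c).re := by
      rw [re_segment]
      exact add_pos_of_nonneg_of_pos (mul_nonneg ha hτ.1.le) (mul_pos hc (sub_pos.2 hτ.2))
    have hlin : HasDerivAt (fun z : ℂ ↦ (a - c) * z + c) (a - c) (τ : ℂ) := by
      simpa using ((hasDerivAt_id (τ : ℂ)).const_mul (a - c)).add_const c
    convert ((hlin.cpow_const (c := ((1 + q : ℝ) : ℂ)) (.inl hre)).div_const
      (((1 + q : ℝ) : ℂ) * (a - c))).comp_ofReal using 1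
    rw [Complex.ofReal_add, Complex.ofReal_one] at hq1 ⊢
    rw [add_sub_cancel_left]
    field_simp
  have ftc := intervalIntegral.integral_eq_sub_of_hasDerivAt_of_le zero_le_one
    ((continuousOn_segment_cpow (by positivity : 0 < 1 + q) ha hc.le).div_const _) hderiv
    (ContinuousOn.intervalIntegrable_of_Icc zero_le_one (continuousOn_segment_cpow hq ha hc.le))
  rw [samePhase, ftc]
  simp [sub_div]

lemma differentiableOn_samePhase (hq : 0 < q) (hc : 0 < c.re) :
    DifferentiableOn ℂ (fun a ↦ samePhase q a c) {a | 0 < a.re} := by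
  have hopen : IsOpen {a : ℂ | 0 < a.re} := isOpen_lt continuous_const Complex.continuous_re
  have hq1 : ((1 + q : ℝ) : ℂ) ≠ 0 := by exact_mod_cast (by positivity : 1 + q ≠ 0)
  have hpow : DifferentiableOn ℂ (fun z : ℂ ↦ z ^ ((1 + q : ℝ) : ℂ)) {a | 0 < a.re} :=
    fun z hz ↦ (differentiableAt_id.cpow_const (.inl hz)).differentiableWithinAt
  refine (((Complex.differentiableOn_dslope (hopen.mem_nhds hc)).2 hpow).div_const
    ((1 + q : ℝ) : ℂ)).congr fun a ha ↦ ?_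
  rcases eq_or_ne a c with rfl | hac
  · have hderiv : HasDerivAt (fun z : ℂ ↦ z ^ ((1 + q : ℝ) : ℂ))
        (((1 + q : ℝ) : ℂ) * a ^ (q : ℂ)) a := by
      simpa using (hasDerivAt_id a).cpow_const (c := ((1 + q : ℝ) : ℂ)) (.inl hc)
    rw [dslope_same, hderiv.deriv, mul_div_cancel_left₀ _ hq1]
    simp [samePhase]
  · rw [samePhase_of_ne hq (le_of_lt ha) hc hac, dslope_of_ne _ hac, slope_def_field, div_div,
      mul_comm]

lemma continuousOn_samePhase (hq : 0 < q) :
    ContinuousOn (fun p : ℂ × ℂ ↦ samePhase q p.1 p.2) ({a | 0 ≤ a.re} ×ˢ {c | 0 < c.re}) := by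
  have hclamp : Continuous fun z : ℂ ↦ ((max z.re 0 : ℝ) + z.im * I) ^ (q : ℂ) :=
    (continuousOn_cpow_const hq).comp_continuous (by fun_prop) fun z ↦ by simp
  have hparam := intervalIntegral.continuous_parametric_intervalIntegral_of_continuous'
    (μ := volume) (f := fun (p : ℂ × ℂ) (τ : ℝ) ↦ ((max ((p.1 - p.2) * τ + p.2).re 0 : ℝ)
      + ((p.1 - p.2) * τ + p.2).im * I) ^ (q : ℂ))
    (hclamp.comp (f := fun x : (ℂ × ℂ) × ℝ ↦ (x.1.1 - x.1.2) * x.2 + x.1.2) (by fun_prop)) 0 1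
  refine hparam.continuousOn.congr fun p hp ↦ intervalIntegral.integral_congr fun τ hτ ↦ ?_
  rw [uIcc_of_le zero_le_one] at hτ
  simp only [max_eq_left (re_segment_nonneg hp.1 (le_of_lt hp.2) hτ), Complex.re_add_im]

lemma add_ne_zero_of_re (ha : 0 ≤ a.re) (hc : 0 < c.re) : a + c ≠ 0 := fun h ↦ by
  have := congrArg Complex.re h
  rw [Complex.add_re, Complex.zero_re] at this
  linarith

lemma differentiableOn_oppositePhase (hq : 0 < q) (hc : 0 < c.re) :
    DifferentiableOn ℂ (fun a ↦ oppositePhase q a c) {a | 0 < a.re} := fun a ha ↦ by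
  have hq1 : ((1 + q : ℝ) : ℂ) ≠ 0 := by exact_mod_cast (by positivity : 1 + q ≠ 0)
  refine DifferentiableAt.differentiableWithinAt (.div ?_ (by fun_prop)
    (mul_ne_zero hq1 (add_ne_zero_of_re (le_of_lt ha) hc)))
  exact (differentiableAt_id.cpow_const (.inl ha)).add_const _

lemma continuousOn_oppositePhase (hq : 0 < q) :
    ContinuousOn (fun p : ℂ × ℂ ↦ oppositePhase q p.1 p.2) ({a | 0 ≤ a.re} ×ˢ {c | 0 < c.re}) := by
  have hq0 : 0 < 1 + q := by positivity
  have hq1 : ((1 + q : ℝ) : ℂ) ≠ 0 := by exact_mod_cast hq0.ne'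
  refine ContinuousOn.div (.add ?_ ?_) (by fun_prop)
    fun p hp ↦ mul_ne_zero hq1 (add_ne_zero_of_re hp.1 hp.2)
  · exact (continuousOn_cpow_const hq0).comp continuous_fst.continuousOn fun p hp ↦ hp.1
  · exact (continuousOn_cpow_const hq0).comp continuous_snd.continuousOn fun p hp ↦
      mem_ofPred.2 (le_of_lt hp.2)

end Phase

section PhaseBounds

variable {q δ : ℝ} {a c : ℂ}

lemma im_segment (a c : ℂ) (τ : ℝ) : ((a - c) * τ + c).im = a.im * τ + c.im * (1 - τ) := by
  simp only [Complex.add_im, Complex.im_mul_ofReal, Complex.sub_im]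
  ring

lemma segment_mem_thickCone (ha : a ∈ thickCone δ) (hc : c ∈ thickCone δ) {τ : ℝ}
    (hτ : τ ∈ Icc (0 : ℝ) 1) : (a - c) * τ + c ∈ thickCone δ := by
  have hτ' : 0 ≤ 1 - τ := sub_nonneg.2 hτ.2
  refine ⟨re_segment_nonneg ha.1 hc.1 hτ, ?_⟩
  rw [re_segment, im_segment]
  calc |a.im * τ + c.im * (1 - τ)| ≤ |a.im| * τ + |c.im| * (1 - τ) := by
        refine (abs_add_le _ _).trans_eq ?_
        rw [abs_mul, abs_mul, abs_of_nonneg hτ.1, abs_of_nonneg hτ']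
    _ ≤ (1 + δ * a.re) * τ + (1 + δ * c.re) * (1 - τ) :=
        add_le_add (mul_le_mul_of_nonneg_right ha.2 hτ.1) (mul_le_mul_of_nonneg_right hc.2 hτ')
    _ = 1 + δ * (a.re * τ + c.re * (1 - τ)) := by ring

lemma half_add_rpow_le_norm_segment_rpow (hq : 0 ≤ q) (ha : 0 ≤ a.re) (hc : 0 ≤ c.re) {τ : ℝ}
    (hτ : τ ∈ Icc (0 : ℝ) 1) :
    (a.re ^ q * τ ^ q + c.re ^ q * (1 - τ) ^ q) / 2 ≤ ‖(a - c) * τ + c‖ ^ q := by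
  have hτ' : 0 ≤ 1 - τ := sub_nonneg.2 hτ.2
  have hre : a.re * τ + c.re * (1 - τ) ≤ ‖(a - c) * τ + c‖ :=
    (re_segment a c τ).symm.trans_le (Complex.re_le_norm _)
  have hleft : (a.re * τ) ^ q ≤ ‖(a - c) * τ + c‖ ^ q :=
    rpow_le_rpow (mul_nonneg ha hτ.1) (by nlinarith [mul_nonneg hc hτ']) hq
  have hright : (c.re * (1 - τ)) ^ q ≤ ‖(a - c) * τ + c‖ ^ q :=
    rpow_le_rpow (mul_nonneg hc hτ') (by nlinarith [mul_nonneg ha hτ.1]) hq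
  rw [mul_rpow ha hτ.1] at hleft
  rw [mul_rpow hc hτ'] at hright
  linarith

lemma re_samePhase_ge (hq : 0 < q) (hδ : 0 < δ) (hδq : 2 * δ * q ≤ 1) (ha : a ∈ thickCone δ)
    (hc : c ∈ thickCone δ) :
    (a.re ^ q + c.re ^ q) / (4 * (1 + q)) - 2 * (2 + 1 / δ) ^ q ≤ (samePhase q a c).re := by
  have hcont := continuousOn_segment_cpow hq ha.1 hc.1
  have hcτ : Continuous fun τ : ℝ ↦ τ ^ q := continuous_rpow_const hq.le
  have : Continuous fun τ : ℝ ↦ (1 - τ) ^ q := hcτ.comp (continuous_sub_left 1)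
  have hpow : ∫ τ in (0 : ℝ)..1, τ ^ q = 1 / (1 + q) := by
    rw [integral_rpow (.inl (by linarith)), one_rpow, zero_rpow (by positivity), sub_zero, add_comm]
  have hpow' : ∫ τ in (0 : ℝ)..1, (1 - τ) ^ q = 1 / (1 + q) := by
    rw [intervalIntegral.integral_comp_sub_left (fun τ : ℝ ↦ τ ^ q), sub_self, sub_zero, hpow]
  calc (a.re ^ q + c.re ^ q) / (4 * (1 + q)) - 2 * (2 + 1 / δ) ^ q
      = ∫ τ in (0 : ℝ)..1,
          (a.re ^ q / 4 * τ ^ q + c.re ^ q / 4 * (1 - τ) ^ q - 2 * (2 + 1 / δ) ^ q) := by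
        rw [intervalIntegral.integral_sub (Continuous.intervalIntegrable (by fun_prop) _ _)
          (Continuous.intervalIntegrable (by fun_prop) _ _), intervalIntegral.integral_add
          (Continuous.intervalIntegrable (by fun_prop) _ _)
          (Continuous.intervalIntegrable (by fun_prop) _ _), intervalIntegral.integral_const_mul,
          intervalIntegral.integral_const_mul, hpow, hpow']
        simp only [one_div, intervalIntegral.integral_const_mul, intervalIntegral.integral_const,
          sub_zero, smul_eq_mul, one_mul, sub_left_inj]
        field_simp
    _ ≤ ∫ τ in (0 : ℝ)..1, (((a - c) * τ + c) ^ (q : ℂ)).re := by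
        refine intervalIntegral.integral_mono_on zero_le_one
          (Continuous.intervalIntegrable (by fun_prop) _ _)
          ((Complex.continuous_re.comp_continuousOn hcont).intervalIntegrable_of_Icc zero_le_one)
          fun τ hτ ↦ ?_
        have := re_cpow_ge hq.le hδ hδq (segment_mem_thickCone ha hc hτ)
        have := half_add_rpow_le_norm_segment_rpow hq.le ha.1 hc.1 hτ
        linarith
    _ = (samePhase q a c).re :=
        Complex.reCLM.intervalIntegral_comp_comm (hcont.intervalIntegrable_of_Icc zero_le_one)

lemma add_mul_add_rpow_le {x y : ℝ} (hq : 0 ≤ q) (hx : 0 ≤ x) (hy : 0 ≤ y) :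
    (x + y) * (x ^ q + y ^ q) ≤ 2 * (x ^ (1 + q) + y ^ (1 + q)) := by
  rw [rpow_add_of_nonneg hx zero_le_one hq, rpow_add_of_nonneg hy zero_le_one hq, rpow_one,
    rpow_one]
  rcases le_total x y with h | h <;> nlinarith [rpow_le_rpow (by assumption) h hq]

lemma re_oppositePhase_ge (hq : 0 < q) (hδ : 0 < δ) (hδq : 2 * δ * (2 + q) ≤ 1)
    (ha : a ∈ thickCone δ) (hc : c ∈ cone δ) :
    (a.re ^ q + c.re ^ q) / (4 * (1 + q)) - 12 * (2 + 1 / δ) ^ q ≤ (oppositePhase q a c).re := by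
  have hδ1 : δ ≤ 1 := by nlinarith
  have hsum : a + c ∈ thickCone δ := add_mem_thickCone ha hc
  have hne : a + c ≠ 0 := add_ne_zero_of_re ha.1 hc.1
  have hpos : 0 < ‖a + c‖ := norm_pos_iff.2 hne
  have hre : (a + c).re = a.re + c.re := Complex.add_re a c
  have hcnorm : ‖c‖ ≤ 2 * ‖a + c‖ := by
    linarith [norm_le_two_mul_re hδ1 hc, Complex.re_le_norm (a + c), ha.1]
  have hanorm : ‖a‖ ≤ 3 * ‖a + c‖ := by
    have : ‖a‖ ≤ ‖a + c‖ + ‖c‖ := by simpa using norm_sub_le (a + c) c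
    linarith
  have hquot_a := re_cpow_one_add_div_ge hq.le hδ hδq ha hsum hne (by linarith [hc.1]) hanorm
  have hquot_c := re_cpow_one_add_div_ge hq.le hδ hδq (cone_subset_thickCone hc) hsum hne
    (by linarith [ha.1]) (by linarith)
  have hmean : (a.re ^ q + c.re ^ q) / 2 ≤
      ‖a‖ ^ (1 + q) / ‖a + c‖ + ‖c‖ ^ (1 + q) / ‖a + c‖ := by
    rw [← add_div, div_le_div_iff₀ two_pos hpos]
    calc (a.re ^ q + c.re ^ q) * ‖a + c‖ ≤ (‖a‖ ^ q + ‖c‖ ^ q) * (‖a‖ + ‖c‖) := by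
          gcongr
          exacts [ha.1, Complex.re_le_norm a, hc.1.le, Complex.re_le_norm c, norm_add_le a c]
      _ = (‖a‖ + ‖c‖) * (‖a‖ ^ q + ‖c‖ ^ q) := mul_comm _ _
      _ ≤ 2 * (‖a‖ ^ (1 + q) + ‖c‖ ^ (1 + q)) :=
          add_mul_add_rpow_le hq.le (norm_nonneg a) (norm_nonneg c)
      _ = (‖a‖ ^ (1 + q) + ‖c‖ ^ (1 + q)) * 2 := mul_comm _ _
  have heq : (oppositePhase q a c).re = ((a ^ ((1 + q : ℝ) : ℂ) / (a + c)).re +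
      (c ^ ((1 + q : ℝ) : ℂ) / (a + c)).re) / (1 + q) := by
    rw [oppositePhase, mul_comm, ← div_div, Complex.div_ofReal_re, add_div, Complex.add_re]
  have hR : 0 ≤ (2 + 1 / δ) ^ q := by positivity
  rw [heq, ← sub_nonneg]
  have : (a.re ^ q + c.re ^ q) / (4 * (1 + q)) = (a.re ^ q + c.re ^ q) / 4 / (1 + q) := by
    rw [div_div]
  rw [this, sub_nonneg, sub_le_iff_le_add, ← sub_le_iff_le_add', ← sub_div,
    div_le_iff₀ (by positivity)]
  nlinarith

end PhaseBounds

section IsPhase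

variable {q δ κ C : ℝ} {a c : ℂ} {E : ℂ → ℂ → ℂ}

/-- A symmetric exponent `E(a, c)`, holomorphic in each variable on the right half-plane, whose
real part grows like `κ (|a|^q + |c|^q)` when `a` stays in the thickened sector of slope `δ` and `c`
in the sector. These are the properties of the two continuations of `M` on which all contour
deformations rest. -/
structure IsPhase (q δ κ C : ℝ) (E : ℂ → ℂ → ℂ) : Prop where
  comm (a c : ℂ) : E a c = E c a
  differentiableOn {c : ℂ} (hc : 0 < c.re) : DifferentiableOn ℂ (fun a ↦ E a c) {a | 0 < a.re}
  continuousOn : ContinuousOn (fun p : ℂ × ℂ ↦ E p.1 p.2) ({a | 0 ≤ a.re} ×ˢ {c | 0 < c.re})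
  re_ge {a c : ℂ} (ha : a ∈ thickCone δ) (hc : c ∈ cone δ) :
    κ * (a.re ^ q + ‖c‖ ^ q) - C ≤ (E a c).re

lemma mul_add_norm_rpow_le (hq : 0 < q) (hδ : δ ≤ 1) (ha : 0 ≤ a.re) (hc : c ∈ cone δ) :
    1 / (4 * (1 + q) * 2 ^ q) * (a.re ^ q + ‖c‖ ^ q) ≤ (a.re ^ q + c.re ^ q) / (4 * (1 + q)) := by
  have ha' : a.re ^ q ≤ 2 ^ q * a.re ^ q :=
    le_mul_of_one_le_left (by positivity) (one_le_rpow one_le_two hq.le)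
  have hc' : ‖c‖ ^ q ≤ 2 ^ q * c.re ^ q := by
    rw [← mul_rpow two_pos.le hc.1.le]
    exact rpow_le_rpow (norm_nonneg c) (norm_le_two_mul_re hδ hc) hq.le
  calc 1 / (4 * (1 + q) * 2 ^ q) * (a.re ^ q + ‖c‖ ^ q)
      ≤ 1 / (4 * (1 + q) * 2 ^ q) * (2 ^ q * a.re ^ q + 2 ^ q * c.re ^ q) := by gcongr
    _ = (a.re ^ q + c.re ^ q) / (4 * (1 + q)) := by field_simp

lemma isPhase_samePhase (hq : 0 < q) (hδ : 0 < δ) (hδq : 2 * δ * (2 + q) ≤ 1) :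
    IsPhase q δ (1 / (4 * (1 + q) * 2 ^ q)) (12 * (2 + 1 / δ) ^ q) (samePhase q) where
  comm := samePhase_comm q
  differentiableOn := differentiableOn_samePhase hq
  continuousOn := continuousOn_samePhase hq
  re_ge ha hc := by
    have := mul_add_norm_rpow_le hq (by nlinarith) ha.1 hc
    have := re_samePhase_ge hq hδ (by nlinarith) ha (cone_subset_thickCone hc)
    have : 0 ≤ (2 + 1 / δ) ^ q := by positivity
    linarith

lemma isPhase_oppositePhase (hq : 0 < q) (hδ : 0 < δ) (hδq : 2 * δ * (2 + q) ≤ 1) :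
    IsPhase q δ (1 / (4 * (1 + q) * 2 ^ q)) (12 * (2 + 1 / δ) ^ q) (oppositePhase q) where
  comm := oppositePhase_comm q
  differentiableOn := differentiableOn_oppositePhase hq
  continuousOn := continuousOn_oppositePhase hq
  re_ge ha hc := (sub_le_sub_right (mul_add_norm_rpow_le hq (by nlinarith) ha.1 hc) _).trans
    (re_oppositePhase_ge hq hδ hδq ha hc)

lemma exists_isPhase {q : ℝ} (hq : 0 < q) :
    ∃ δ > 0, δ ≤ 1 ∧ ∃ κ > 0, ∃ C, IsPhase q δ κ C (samePhase q) ∧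
      IsPhase q δ κ C (oppositePhase q) := by
  have hδ : 0 < 1 / (2 * (2 + q)) := by positivity
  have hδq : 2 * (1 / (2 * (2 + q))) * (2 + q) ≤ 1 := by field_simp; rfl
  exact ⟨_, hδ, by rw [div_le_one (by positivity)]; linarith, _, by positivity, _,
    isPhase_samePhase hq hδ hδq, isPhase_oppositePhase hq hδ hδq⟩

namespace IsPhase

lemma re_neg_le (hE : IsPhase q δ κ C E) (ha : a ∈ thickCone δ) (hc : c ∈ cone δ) :
    (-E a c).re ≤ C + -κ * a.re ^ q + -κ * ‖c‖ ^ q := by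
  rw [Complex.neg_re]
  linarith [hE.re_ge ha hc]

lemma norm_exp_neg_le (hE : IsPhase q δ κ C E) (ha : a ∈ thickCone δ) (hc : c ∈ cone δ) :
    ‖Complex.exp (-E a c)‖ ≤ rexp C * rexp (-κ * a.re ^ q) * rexp (-κ * ‖c‖ ^ q) := by
  rw [Complex.norm_exp, ← exp_add, ← exp_add]
  exact exp_le_exp.2 (hE.re_neg_le ha hc)

end IsPhase

lemma norm_exp_sub_exp_le {z w : ℂ} {m : ℝ} (hz : z.re ≤ m) (hw : w.re ≤ m) :
    ‖Complex.exp z - Complex.exp w‖ ≤ rexp m * ‖z - w‖ := by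
  refine (convex_halfSpace_re_le m).norm_image_sub_le_of_norm_deriv_le
    (fun x _ ↦ Complex.differentiableAt_exp) (fun x hx ↦ ?_) hw hz
  rw [Complex.deriv_exp, Complex.norm_exp]
  exact exp_le_exp.2 hx

section Jump

variable {t : ℝ}

lemma vertical_mem_thickCone (ht : |t| ≤ 1) : (t * I : ℂ) ∈ thickCone δ := by
  simpa [thickCone] using ht

lemma samePhase_sub_oppositePhase (hq : 0 < q) (t : ℝ) (hc : 0 < c.re) :
    samePhase q (-(t * I)) c - oppositePhase q (t * I) c =
      -((-(t * I)) ^ ((1 + q : ℝ) : ℂ) + (t * I) ^ ((1 + q : ℝ) : ℂ)) /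
        (((1 + q : ℝ) : ℂ) * (t * I + c)) := by
  have hne : t * I + c ≠ 0 := add_ne_zero_of_re (by simp) hc
  have hne' : -(t * I) - c ≠ 0 := by rw [← neg_add']; exact neg_ne_zero.2 hne
  have hq1 : ((1 + q : ℝ) : ℂ) ≠ 0 := by exact_mod_cast (by positivity : 1 + q ≠ 0)
  rw [samePhase_of_ne hq (by simp) hc (sub_ne_zero.1 hne'), oppositePhase]
  field_simp
  ring

/- On the imaginary axis the two continuations differ only by the branch of the power `a ^ (1 + q)`,
so that their difference vanishes to order `1 + q` at the origin. -/
lemma norm_samePhase_sub_oppositePhase_le (hq : 0 < q) (hδ : δ ≤ 1) (ht : 0 ≤ t)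
    (hc : c ∈ cone δ) :
    ‖samePhase q (-(t * I)) c - oppositePhase q (t * I) c‖ ≤
      6 * min (t ^ (1 + q) / ‖c‖) (t ^ q) := by
  have hcpos : 0 < ‖c‖ := hc.1.trans_le (Complex.re_le_norm c)
  have hc2 : ‖c‖ ≤ 2 * ‖t * I + c‖ := by
    have hre : c.re ≤ ‖t * I + c‖ := by simpa using Complex.re_le_norm (t * I + c)
    linarith [norm_le_two_mul_re hδ hc]
  have ht3 : t ≤ 3 * ‖t * I + c‖ := by
    have : ‖(t * I : ℂ)‖ ≤ ‖t * I + c‖ + ‖c‖ := by simpa using norm_sub_le (t * I + c) c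
    rw [norm_mul, Complex.norm_I, mul_one, Complex.norm_of_nonneg ht] at this
    linarith
  have hpos : 0 < ‖t * I + c‖ := by linarith
  have hnum : ‖(-(t * I)) ^ ((1 + q : ℝ) : ℂ) + (t * I) ^ ((1 + q : ℝ) : ℂ)‖ ≤
      2 * t ^ (1 + q) := by
    refine (norm_add_le _ _).trans_eq ?_
    rw [Complex.norm_cpow_real, Complex.norm_cpow_real, norm_neg, norm_mul, Complex.norm_I,
      mul_one, Complex.norm_of_nonneg ht, two_mul]
  have hquot : ‖samePhase q (-(t * I)) c - oppositePhase q (t * I) c‖ ≤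
      2 * t ^ (1 + q) / ‖t * I + c‖ := by
    rw [samePhase_sub_oppositePhase hq t hc.1, norm_div, norm_neg, norm_mul,
      Complex.norm_of_nonneg (by positivity : 0 ≤ 1 + q)]
    gcongr
    exact le_mul_of_one_le_left hpos.le (by linarith)
  rw [mul_min_of_nonneg _ _ (by norm_num : (0 : ℝ) ≤ 6)]
  refine hquot.trans (le_min ?_ ?_)
  · rw [← mul_div_assoc, div_le_div_iff₀ hpos hcpos]
    nlinarith [rpow_nonneg ht (1 + q)]
  · rw [div_le_iff₀ hpos, rpow_add_of_nonneg ht zero_le_one hq.le, rpow_one]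
    nlinarith [rpow_nonneg ht q]

lemma norm_exp_samePhase_sub_exp_oppositePhase_le (hq : 0 < q) (hδ : δ ≤ 1)
    (hP : IsPhase q δ κ C (samePhase q)) (hN : IsPhase q δ κ C (oppositePhase q))
    (ht : t ∈ Icc (0 : ℝ) 1) (hc : c ∈ cone δ) :
    ‖Complex.exp (-samePhase q (-(t * I)) c) - Complex.exp (-oppositePhase q (t * I) c)‖ ≤
      6 * rexp C * rexp (-κ * ‖c‖ ^ q) * min (t ^ (1 + q) / ‖c‖) (t ^ q) := by
  have ht' : |t| ≤ 1 := abs_le.2 ⟨by linarith [ht.1], ht.2⟩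
  have hPre := hP.re_neg_le
    (by simpa using vertical_mem_thickCone (t := -t) (by simpa using ht')) hc
  have hNre := hN.re_neg_le (vertical_mem_thickCone ht') hc
  have hzero : (-(t * I) : ℂ).re = 0 := by simp
  have hzero' : (t * I : ℂ).re = 0 := by simp
  rw [hzero, zero_rpow hq.ne', mul_zero, add_zero] at hPre
  rw [hzero', zero_rpow hq.ne', mul_zero, add_zero] at hNre
  calc _ ≤ rexp (C + -κ * ‖c‖ ^ q) * ‖-samePhase q (-(t * I)) c - -oppositePhase q (t * I) c‖ :=
        norm_exp_sub_exp_le hPre hNre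
    _ = rexp (C + -κ * ‖c‖ ^ q) * ‖samePhase q (-(t * I)) c - oppositePhase q (t * I) c‖ := by
        rw [neg_sub_neg, norm_sub_rev]
    _ ≤ rexp (C + -κ * ‖c‖ ^ q) * (6 * min (t ^ (1 + q) / ‖c‖) (t ^ q)) := by
        gcongr
        exact norm_samePhase_sub_oppositePhase_le hq hδ ht.1 hc
    _ = _ := by rw [exp_add]; ring

end Jump

end IsPhase

section PartialFourier

/- The one-term upper bound of Watson's lemma. -/
lemma norm_integral_le_of_norm_le_rpow_mul_exp {f : ℝ → ℂ} {m D x : ℝ} (hm : -1 < m) (hx : 0 < x)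
    (hf : ∀ t ∈ Ioc (0 : ℝ) 1, ‖f t‖ ≤ D * (t ^ m * rexp (-(x * t)))) :
    ‖∫ t in (0 : ℝ)..1, f t‖ ≤ D * (Gamma (m + 1) * x ^ (-(m + 1))) := by
  have hD : 0 ≤ D := nonneg_of_mul_nonneg_left
    ((norm_nonneg _).trans (hf 1 ⟨one_pos, le_rfl⟩)) (by positivity)
  have hint : IntegrableOn (fun t : ℝ ↦ t ^ m * rexp (-(x * t))) (Ioi 0) := by
    simpa using integrableOn_rpow_mul_exp_neg_mul_rpow hm one_pos hx
  calc ‖∫ t in (0 : ℝ)..1, f t‖ ≤ ∫ t in (0 : ℝ)..1, D * (t ^ m * rexp (-(x * t))) := by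
        refine intervalIntegral.norm_integral_le_of_norm_le zero_le_one (.of_forall hf) ?_
        rw [intervalIntegrable_iff_integrableOn_Ioc_of_le zero_le_one]
        exact (hint.mono_set Ioc_subset_Ioi_self).const_mul D
    _ = D * ∫ t in Ioc (0 : ℝ) 1, t ^ m * rexp (-(x * t)) := by
        rw [intervalIntegral.integral_of_le zero_le_one, integral_const_mul]
    _ ≤ D * ∫ t in Ioi (0 : ℝ), t ^ m * rexp (-(x * t)) := by
        refine mul_le_mul_of_nonneg_left (setIntegral_mono_set hint ?_
          Ioc_subset_Ioi_self.eventuallyLE) hD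
        exact (ae_restrict_iff' measurableSet_Ioi).2 (.of_forall fun t ht ↦
          mul_nonneg (rpow_nonneg (le_of_lt ht) _) (exp_pos _).le)
    _ = D * (Gamma (m + 1) * x ^ (-(m + 1))) := by
        rw [← add_sub_cancel_right m 1, integral_rpow_mul_exp_neg_mul_Ioi (by linarith) hx,
          add_sub_cancel_right, one_div, inv_rpow hx.le, rpow_neg hx.le, mul_comm (Gamma _)]

variable {q δ κ C : ℝ} {E : ℂ → ℂ → ℂ} {c : ℂ} {b : ℕ} {x : ℝ}

/-- The integrand, continued to complex arguments, of the half-line Fourier transform of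
`a ^ b * exp (-E(a, c))` in its first variable. -/
noncomputable def fourierIntegrand (E : ℂ → ℂ → ℂ) (b : ℕ) (x : ℝ) (a c : ℂ) : ℂ :=
  a ^ b * Complex.exp (-E a c) * Complex.exp (-(a * x * I))

/-- The half-line Fourier transform of `a ^ b * exp (-E(a, c))` in its first variable, at frequency
`x`. -/
noncomputable def partialFourier (E : ℂ → ℂ → ℂ) (b : ℕ) (x : ℝ) (c : ℂ) : ℂ :=
  ∫ t in Ioi (0 : ℝ), fourierIntegrand E b x t c

lemma IsPhase.norm_fourierIntegrand_le (hE : IsPhase q δ κ C E) {a : ℂ} (ha : a ∈ thickCone δ)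
    (hc : c ∈ cone δ) :
    ‖fourierIntegrand E b x a c‖ ≤
      rexp C * rexp (-κ * ‖c‖ ^ q) * (‖a‖ ^ b * rexp (-κ * a.re ^ q)) * rexp (a.im * x) := by
  have hexp : ‖Complex.exp (-(a * x * I))‖ = rexp (a.im * x) := by simp [Complex.norm_exp]
  rw [fourierIntegrand, norm_mul, norm_mul, norm_pow, hexp]
  calc ‖a‖ ^ b * ‖Complex.exp (-E a c)‖ * rexp (a.im * x)
      ≤ ‖a‖ ^ b * (rexp C * rexp (-κ * a.re ^ q) * rexp (-κ * ‖c‖ ^ q)) * rexp (a.im * x) := by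
        gcongr
        exact hE.norm_exp_neg_le ha hc
    _ = _ := by ring

lemma IsPhase.continuousOn_fourierIntegrand (hE : IsPhase q δ κ C E) :
    ContinuousOn (fun p : ℂ × ℂ ↦ fourierIntegrand E b x p.1 p.2)
      ({a | 0 ≤ a.re} ×ˢ {c | 0 < c.re}) :=
  (((continuous_fst.pow b).continuousOn).mul hE.continuousOn.neg.cexp).mul
    (Continuous.continuousOn (by fun_prop))

lemma IsPhase.differentiableOn_fourierIntegrand (hE : IsPhase q δ κ C E) (hc : 0 < c.re) :
    DifferentiableOn ℂ (fun a ↦ fourierIntegrand E b x a c) {a | 0 < a.re} :=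
  ((differentiableOn_id.pow b).mul (hE.differentiableOn hc).neg.cexp).mul
    (Differentiable.differentiableOn (by fun_prop))

lemma strip_subset_thickCone (hδ : 0 ≤ δ) {a : ℂ} (hre : 0 ≤ a.re) (him : |a.im| ≤ 1) :
    a ∈ thickCone δ :=
  ⟨hre, him.trans (le_add_of_nonneg_right (mul_nonneg hδ hre))⟩

lemma IsPhase.norm_fourierIntegrand_le_of_abs_im_le_one (hE : IsPhase q δ κ C E) (hδ : 0 ≤ δ)
    (hc : c ∈ cone δ) {a : ℂ} (hre : 0 ≤ a.re) (him : |a.im| ≤ 1) :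
    ‖fourierIntegrand E b x a c‖ ≤
      rexp C * rexp (-κ * ‖c‖ ^ q) * ((a.re + 1) ^ b * rexp (-κ * a.re ^ q)) *
        rexp (a.im * x) := by
  have hnorm : ‖a‖ ≤ a.re + 1 := by
    have := Complex.norm_le_abs_re_add_abs_im a
    rw [abs_of_nonneg hre] at this
    linarith
  refine (hE.norm_fourierIntegrand_le (strip_subset_thickCone hδ hre him) hc).trans ?_
  gcongr

lemma IsPhase.partialFourier_eq_shift (hE : IsPhase q δ κ C E) (hq : 0 < q) (hκ : 0 < κ)
    (hδ : 0 ≤ δ) (hc : c ∈ cone δ) {h : ℝ} (hh : |h| ≤ 1) :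
    partialFourier E b x c = (∫ t in Ioi (0 : ℝ), fourierIntegrand E b x (t + h * I) c)
      + I * ∫ y in (0 : ℝ)..h, fourierIntegrand E b x (y * I) c := by
  have him (y : ℝ) (hy : y ∈ [[0, h]]) : |y| ≤ 1 :=
    (by simpa using abs_sub_left_of_mem_uIcc hy : |y| ≤ |h|).trans hh
  have hmajorant (K : ℝ) :=
    ((integrableOn_add_one_pow_mul_exp hκ hq b).const_mul
      (rexp C * rexp (-κ * ‖c‖ ^ q))).mul_const K
  refine integral_Ioi_eq_integral_Ioi_add_mul_I
    (g := fun a ↦ fourierIntegrand E b x a c)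
    (B := fun t ↦ rexp C * rexp (-κ * ‖c‖ ^ q) * ((t + 1) ^ b * rexp (-κ * t ^ q)) * rexp |x|)
    ?_ ?_ (fun z hre hz ↦ ?_) (hmajorant _) ?_
  · exact hE.continuousOn_fourierIntegrand.comp (f := fun a : ℂ ↦ (a, c)) (by fun_prop)
      fun z hz ↦ ⟨hz.1, hc.1⟩
  · exact (hE.differentiableOn_fourierIntegrand hc.1).mono fun z hz ↦ hz.1
  · refine (hE.norm_fourierIntegrand_le_of_abs_im_le_one hδ hc hre (him _ hz)).trans ?_
    gcongr
    calc z.im * x ≤ |z.im| * |x| := (le_abs_self _).trans_eq (abs_mul _ _)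
      _ ≤ |x| := mul_le_of_le_one_left (abs_nonneg x) (him _ hz)
  · simpa using ((tendsto_add_one_pow_mul_exp hκ hq b).const_mul
      (rexp C * rexp (-κ * ‖c‖ ^ q))).mul_const (rexp |x|)

lemma IsPhase.norm_partialFourier_sub_le (hE : IsPhase q δ κ C E) (hq : 0 < q) (hκ : 0 < κ)
    (hδ : 0 ≤ δ) (hc : c ∈ cone δ) {h : ℝ} (hh : |h| ≤ 1) :
    ‖partialFourier E b x c - I * ∫ y in (0 : ℝ)..h, fourierIntegrand E b x (y * I) c‖ ≤
      rexp C * rexp (-κ * ‖c‖ ^ q) * (∫ t in Ioi (0 : ℝ), (t + 1) ^ b * rexp (-κ * t ^ q)) *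
        rexp (h * x) := by
  rw [hE.partialFourier_eq_shift hq hκ hδ hc hh, add_sub_cancel_right, ← integral_const_mul,
    ← integral_mul_const]
  refine norm_integral_le_of_norm_le
    (((integrableOn_add_one_pow_mul_exp hκ hq b).const_mul _).mul_const _)
    ((ae_restrict_iff' measurableSet_Ioi).2 (.of_forall fun t ht ↦ ?_))
  simpa using hE.norm_fourierIntegrand_le_of_abs_im_le_one (b := b) (x := x) hδ hc
    (a := t + h * I) (by simpa using le_of_lt ht) (by simpa using hh)

end PartialFourier

section Cancellation

variable {q δ κ C : ℝ} {c : ℂ} {x : ℝ}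

/- The vertical contours `[0, -i]` and `[0, i]` of the two exponents merge into the Laplace
transform of the difference of the two exponentials. -/
lemma vertical_add_vertical (hP : IsPhase q δ κ C (samePhase q))
    (hN : IsPhase q δ κ C (oppositePhase q)) (hc : 0 < c.re) (b : ℕ) (x : ℝ) :
    (I * ∫ y in (0 : ℝ)..-1, fourierIntegrand (samePhase q) b x (y * I) c) +
      (-1) ^ b * (I * ∫ y in (0 : ℝ)..1, fourierIntegrand (oppositePhase q) b (-x) (y * I) c) =
    -I * ∫ y in (0 : ℝ)..1, (-(y * I)) ^ b * (Complex.exp (-samePhase q (-(y * I)) c) -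
      Complex.exp (-oppositePhase q (y * I) c)) * rexp (-(x * y)) := by
  have hcont {E : ℂ → ℂ → ℂ} (hE : IsPhase q δ κ C E) (x : ℝ) :
      Continuous fun y : ℝ ↦ fourierIntegrand E b x (y * I) c :=
    hE.continuousOn_fourierIntegrand.comp_continuous (f := fun y : ℝ ↦ ((y * I : ℂ), c))
      (by fun_prop) fun y ↦ ⟨by simp, hc⟩
  have hreflect := intervalIntegral.integral_comp_neg (a := 0) (b := 1)
    (fun y : ℝ ↦ fourierIntegrand (samePhase q) b x (y * I) c)
  rw [neg_zero] at hreflect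
  have hreflected : Continuous fun y : ℝ ↦
      fourierIntegrand (samePhase q) b x ((-y : ℝ) * I) c := (hcont hP x).comp continuous_neg
  calc _ = -I * ((∫ y in (0 : ℝ)..1, fourierIntegrand (samePhase q) b x ((-y : ℝ) * I) c) -
        ∫ y in (0 : ℝ)..1, (-1) ^ b * fourierIntegrand (oppositePhase q) b (-x) (y * I) c) := by
        rw [intervalIntegral.integral_symm, ← hreflect, intervalIntegral.integral_const_mul]
        ring
    _ = _ := by
        rw [← intervalIntegral.integral_sub
          (hreflected.intervalIntegrable _ _)
          (((hcont hN (-x)).const_mul _).intervalIntegrable _ _)]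
        congr 1
        refine intervalIntegral.integral_congr fun y _ ↦ ?_
        have hkernel : -((y : ℂ) * I * -x * I) = (-(x * y) : ℝ) := by
          push_cast
          linear_combination (x * y : ℂ) * Complex.I_sq
        have hkernel' : -(-((y : ℂ) * I) * x * I) = (-(x * y) : ℝ) := by
          push_cast
          linear_combination (x * y : ℂ) * Complex.I_sq
        simp only [fourierIntegrand, hkernel, Complex.ofReal_neg, neg_mul (y : ℂ), hkernel']
        rw [neg_pow (y * I : ℂ), Complex.ofReal_exp]
        push_cast
        ring

lemma norm_vertical_integrand_le (hq : 0 < q) (hδ1 : δ ≤ 1)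
    (hP : IsPhase q δ κ C (samePhase q)) (hN : IsPhase q δ κ C (oppositePhase q))
    (hc : c ∈ cone δ) (b : ℕ) (x : ℝ) {t : ℝ} (ht : t ∈ Ioc (0 : ℝ) 1) :
    ‖(-(t * I)) ^ b * (Complex.exp (-samePhase q (-(t * I)) c) -
      Complex.exp (-oppositePhase q (t * I) c)) * rexp (-(x * t))‖ ≤
    6 * rexp C * rexp (-κ * ‖c‖ ^ q) *
      (min (t ^ (b + q + 1) / ‖c‖) (t ^ (b + q)) * rexp (-(x * t))) := by
  have ht0 : 0 ≤ t := ht.1.le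
  have hbase : ‖(-(t * I) : ℂ)‖ = t := by simp [abs_of_pos ht.1]
  have hdiff := norm_exp_samePhase_sub_exp_oppositePhase_le hq hδ1 hP hN ⟨ht0, ht.2⟩ hc
  rw [norm_mul, norm_mul, norm_pow, hbase, Complex.norm_of_nonneg (exp_pos _).le]
  calc t ^ b * _ * rexp (-(x * t))
      ≤ t ^ b * (6 * rexp C * rexp (-κ * ‖c‖ ^ q) * min (t ^ (1 + q) / ‖c‖) (t ^ q)) *
          rexp (-(x * t)) := by gcongr
    _ = 6 * rexp C * rexp (-κ * ‖c‖ ^ q) *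
          (t ^ b * min (t ^ (1 + q) / ‖c‖) (t ^ q) * rexp (-(x * t))) := by ring
    _ = _ := by
        rw [mul_min_of_nonneg _ _ (pow_nonneg ht0 b), ← mul_div_assoc, ← rpow_natCast,
          ← rpow_add ht.1, ← rpow_add ht.1, ← add_assoc, add_right_comm]

lemma norm_vertical_add_vertical_le (hq : 0 < q) (hδ1 : δ ≤ 1)
    (hP : IsPhase q δ κ C (samePhase q)) (hN : IsPhase q δ κ C (oppositePhase q))
    (hc : c ∈ cone δ) (b : ℕ) (hx : 0 < x) :
    ‖(I * ∫ y in (0 : ℝ)..-1, fourierIntegrand (samePhase q) b x (y * I) c) +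
      (-1) ^ b * (I * ∫ y in (0 : ℝ)..1, fourierIntegrand (oppositePhase q) b (-x) (y * I) c)‖ ≤
    6 * rexp C * (Gamma (b + q + 1) + Gamma (b + q + 1 + 1)) * rexp (-κ * ‖c‖ ^ q) *
      (x ^ (-(b + q + 1)) * min (x * ‖c‖)⁻¹ 1) := by
  have hcpos : 0 < ‖c‖ := hc.1.trans_le (Complex.re_le_norm c)
  have hm : (-1 : ℝ) < b + q := by linarith [b.cast_nonneg (α := ℝ)]
  have hΓ : 0 < Gamma (b + q + 1) := Gamma_pos_of_pos (by positivity)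
  have hΓ' : 0 < Gamma (b + q + 1 + 1) := Gamma_pos_of_pos (by positivity)
  set D := 6 * rexp C * rexp (-κ * ‖c‖ ^ q) with hD
  have hbound := fun t ht ↦ norm_vertical_integrand_le hq hδ1 hP hN hc b x (t := t) ht
  rw [vertical_add_vertical hP hN hc.1, norm_mul, norm_neg, Complex.norm_I, one_mul,
    mul_min_of_nonneg _ _ (by positivity), mul_min_of_nonneg _ _ (by positivity)]
  refine le_min ?_ ?_
  · calc _ ≤ D / ‖c‖ * (Gamma (b + q + 1 + 1) * x ^ (-(b + q + 1 + 1))) :=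
          norm_integral_le_of_norm_le_rpow_mul_exp (by linarith) hx fun t ht ↦
            (hbound t ht).trans <| by
              rw [div_mul_eq_mul_div, mul_div_assoc, mul_div_right_comm]
              gcongr
              exact min_le_left _ _
      _ = D * Gamma (b + q + 1 + 1) * (x ^ (-(b + q + 1)) * (x * ‖c‖)⁻¹) := by
          rw [neg_add (b + q + 1) 1, rpow_add hx, rpow_neg_one, mul_inv]
          ring
      _ ≤ D * (Gamma (b + q + 1) + Gamma (b + q + 1 + 1)) *
            (x ^ (-(b + q + 1)) * (x * ‖c‖)⁻¹) := by
          gcongr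
          exact le_add_of_nonneg_left hΓ.le
      _ = _ := by rw [hD]; ring
  · calc _ ≤ D * (Gamma (b + q + 1) * x ^ (-(b + q + 1))) :=
          norm_integral_le_of_norm_le_rpow_mul_exp hm hx fun t ht ↦
            (hbound t ht).trans <| by
              gcongr
              exact min_le_right _ _
      _ ≤ D * ((Gamma (b + q + 1) + Gamma (b + q + 1 + 1)) * x ^ (-(b + q + 1))) := by
          gcongr
          exact le_add_of_nonneg_right hΓ'.le
      _ = _ := by rw [hD]; ring

lemma exists_norm_partialFourier_add_le (hq : 0 < q) (hκ : 0 < κ) (hδ : 0 ≤ δ) (hδ1 : δ ≤ 1)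
    (hP : IsPhase q δ κ C (samePhase q)) (hN : IsPhase q δ κ C (oppositePhase q)) (b : ℕ) :
    ∃ A, 0 ≤ A ∧ ∀ x > 0, ∀ c ∈ cone δ,
      ‖partialFourier (samePhase q) b x c + (-1) ^ b * partialFourier (oppositePhase q) b (-x) c‖ ≤
        A * rexp (-κ * ‖c‖ ^ q) * (rexp (-x) + x ^ (-(b + q + 1)) * min (x * ‖c‖)⁻¹ 1) := by
  set J := ∫ t in Ioi (0 : ℝ), (t + 1) ^ b * rexp (-κ * t ^ q)
  set G := 6 * rexp C * (Gamma (b + q + 1) + Gamma (b + q + 1 + 1))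
  have hJ : 0 ≤ J := setIntegral_nonneg measurableSet_Ioi fun t ht ↦
    mul_nonneg (pow_nonneg (add_nonneg (le_of_lt ht) zero_le_one) b) (exp_pos _).le
  have hG : 0 ≤ G := mul_nonneg (by positivity) (add_nonneg
    (Gamma_nonneg_of_nonneg (by positivity)) (Gamma_nonneg_of_nonneg (by positivity)))
  refine ⟨2 * rexp C * J + G, by positivity, fun x hx c hc ↦ ?_⟩
  have hPshift := hP.norm_partialFourier_sub_le (b := b) (x := x) hq hκ hδ hc (h := -1) (by simp)
  have hNshift := hN.norm_partialFourier_sub_le (b := b) (x := -x) hq hκ hδ hc (h := 1) (by simp)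
  have hvertical := norm_vertical_add_vertical_le hq hδ1 hP hN hc b hx
  rw [neg_one_mul] at hPshift
  rw [one_mul] at hNshift
  set vP := I * ∫ y in (0 : ℝ)..-1, fourierIntegrand (samePhase q) b x (y * I) c
  set vN := I * ∫ y in (0 : ℝ)..1, fourierIntegrand (oppositePhase q) b (-x) (y * I) c
  set e := rexp (-κ * ‖c‖ ^ q)
  calc _ = ‖(partialFourier (samePhase q) b x c - vP) +
        (-1) ^ b * (partialFourier (oppositePhase q) b (-x) c - vN) + (vP + (-1) ^ b * vN)‖ := by
        congr 1
        ring
    _ ≤ rexp C * e * J * rexp (-x) + rexp C * e * J * rexp (-x) +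
        G * e * (x ^ (-(b + q + 1)) * min (x * ‖c‖)⁻¹ 1) := by
        refine (norm_add₃_le).trans (add_le_add_three hPshift ?_ hvertical)
        rwa [norm_mul, norm_pow, norm_neg, norm_one, one_pow, one_mul]
    _ = 2 * rexp C * J * (e * rexp (-x)) +
        G * (e * (x ^ (-(b + q + 1)) * min (x * ‖c‖)⁻¹ 1)) := by ring
    _ ≤ (2 * rexp C * J + G) * (e * rexp (-x)) +
        (2 * rexp C * J + G) * (e * (x ^ (-(b + q + 1)) * min (x * ‖c‖)⁻¹ 1)) := by
        gcongr
        · exact le_add_of_nonneg_right hG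
        · exact le_add_of_nonneg_left (by positivity)
    _ = _ := by ring

end Cancellation

section Rotation

variable {q δ κ C θ x v : ℝ} {b b' : ℕ} {E : ℂ → ℂ → ℂ}

/-- The integrand of `quadrantIntegral`, continued to complex arguments. -/
noncomputable def quadrantIntegrand (E : ℂ → ℂ → ℂ) (b b' : ℕ) (x v : ℝ) (a c : ℂ) : ℂ :=
  fourierIntegrand E b x a c * (c ^ b' * Complex.exp (-(c * v * I)))

/-- The Fourier integral of `a ^ b * c ^ b' * exp (-E(a, c))` over the first quadrant, at frequency
`(x, v)`. -/
noncomputable def quadrantIntegral (E : ℂ → ℂ → ℂ) (b b' : ℕ) (x v : ℝ) : ℂ :=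
  ∫ p in Ioi (0 : ℝ) ×ˢ Ioi (0 : ℝ), quadrantIntegrand E b b' x v p.1 p.2

lemma integral_quadrantIntegrand_left (c : ℂ) :
    ∫ t in Ioi (0 : ℝ), quadrantIntegrand E b b' x v t c =
      partialFourier E b x c * (c ^ b' * Complex.exp (-(c * v * I))) :=
  integral_mul_const _ _

lemma ray_mem_cone (hδ : δ ≤ 1) (hθ : |θ| ≤ δ / 2) {r : ℝ} (hr : 0 < r) :
    (r * Complex.exp (θ * I) : ℂ) ∈ cone δ := by
  have hcos : 1 / 2 ≤ cos θ := half_le_cos (by linarith [abs_nonneg θ])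
  have hsin : |sin θ| ≤ δ * cos θ := abs_sin_le_abs.trans (by nlinarith [abs_nonneg θ])
  refine ⟨?_, ?_⟩
  · rw [Complex.re_ofReal_mul, Complex.exp_ofReal_mul_I_re]
    positivity
  · rw [Complex.re_ofReal_mul, Complex.im_ofReal_mul, Complex.exp_ofReal_mul_I_re,
      Complex.exp_ofReal_mul_I_im, abs_mul, abs_of_pos hr]
    nlinarith

lemma ofReal_mem_thickCone (hδ : 0 ≤ δ) {t : ℝ} (ht : 0 ≤ t) : (t : ℂ) ∈ thickCone δ :=
  strip_subset_thickCone hδ ht (by simp)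

lemma norm_exp_neg_ray (r θ v : ℝ) :
    ‖Complex.exp (-(r * Complex.exp (θ * I) * v * I))‖ = rexp (r * (v * sin θ)) := by
  rw [Complex.norm_exp]
  congr 1
  simp [Complex.exp_ofReal_mul_I_re, Complex.exp_ofReal_mul_I_im, Complex.mul_re, Complex.mul_im]
  ring

lemma mul_sin_nonpos (hθ : |θ| ≤ 1) (hθv : θ * v ≤ 0) : v * sin θ ≤ 0 := by
  have hπ := pi_gt_three
  rcases le_total 0 θ with h | h
  · rcases h.eq_or_lt with rfl | h
    · simp
    · exact mul_nonpos_of_nonpos_of_nonneg (nonpos_of_mul_nonpos_right hθv h)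
        (sin_nonneg_of_nonneg_of_le_pi h.le (by linarith [le_abs_self θ]))
  · rcases h.eq_or_lt with rfl | h
    · simp
    · exact mul_nonpos_of_nonneg_of_nonpos (nonneg_of_mul_nonpos_right hθv h)
        (sin_nonpos_of_nonpos_of_neg_pi_le h.le (by linarith [neg_abs_le θ]))

namespace IsPhase

lemma continuousOn_quadrantIntegrand (hE : IsPhase q δ κ C E) :
    ContinuousOn (fun p : ℂ × ℂ ↦ quadrantIntegrand E b b' x v p.1 p.2)
      ({a | 0 ≤ a.re} ×ˢ {c | 0 < c.re}) :=
  hE.continuousOn_fourierIntegrand.mul (Continuous.continuousOn (by fun_prop))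

lemma differentiableAt_quadrantIntegrand_right (hE : IsPhase q δ κ C E) {a c : ℂ} (ha : 0 < a.re)
    (hc : 0 < c.re) : DifferentiableAt ℂ (fun c ↦ quadrantIntegrand E b b' x v a c) c := by
  have hexp : DifferentiableAt ℂ (fun c ↦ E a c) c := by
    simp only [hE.comm a]
    exact (hE.differentiableOn ha).differentiableAt
      ((isOpen_lt continuous_const Complex.continuous_re).mem_nhds hc)
  unfold quadrantIntegrand fourierIntegrand
  fun_prop

lemma norm_quadrantIntegrand_ray_le (hE : IsPhase q δ κ C E) (hδ : 0 ≤ δ) (hδ1 : δ ≤ 1)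
    (hθ : |θ| ≤ δ / 2) (hθv : θ * v ≤ 0) {t r : ℝ} (ht : 0 ≤ t) (hr : 0 < r) :
    ‖quadrantIntegrand E b b' x v t (r * Complex.exp (θ * I))‖ ≤
      rexp C * (t ^ b * rexp (-κ * t ^ q)) * (r ^ b' * rexp (-κ * r ^ q)) := by
  have hnorm : ‖(r * Complex.exp (θ * I) : ℂ)‖ = r := by
    simp [Complex.norm_exp_ofReal_mul_I, abs_of_pos hr]
  have hfourier := hE.norm_fourierIntegrand_le (b := b) (x := x) (ofReal_mem_thickCone hδ ht)
    (ray_mem_cone hδ1 hθ hr)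
  rw [hnorm, Complex.norm_of_nonneg ht, Complex.ofReal_re, Complex.ofReal_im, zero_mul, exp_zero,
    mul_one] at hfourier
  have hdecay : rexp (r * (v * sin θ)) ≤ 1 := exp_le_one_iff.2
    (mul_nonpos_of_nonneg_of_nonpos hr.le (mul_sin_nonpos (by linarith) hθv))
  rw [quadrantIntegrand, norm_mul, norm_mul, norm_pow, hnorm, norm_exp_neg_ray]
  calc _ ≤ rexp C * rexp (-κ * r ^ q) * (t ^ b * rexp (-κ * t ^ q)) * (r ^ b' * 1) := by gcongr
    _ = _ := by ring

lemma integrableOn_quadrantIntegrand_ray (hE : IsPhase q δ κ C E) (hq : 0 < q) (hκ : 0 < κ)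
    (hδ : 0 ≤ δ) (hδ1 : δ ≤ 1) (hθ : |θ| ≤ δ / 2) (hθv : θ * v ≤ 0) :
    IntegrableOn (fun p : ℝ × ℝ ↦ quadrantIntegrand E b b' x v p.1 (p.2 * Complex.exp (θ * I)))
      (Ioi 0 ×ˢ Ioi 0) := by
  have hmajorant : IntegrableOn (fun p : ℝ × ℝ ↦ rexp C * (p.1 ^ b * rexp (-κ * p.1 ^ q)) *
      (p.2 ^ b' * rexp (-κ * p.2 ^ q))) (Ioi 0 ×ˢ Ioi 0) := by
    rw [IntegrableOn, Measure.volume_eq_prod, ← Measure.prod_restrict]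
    exact ((integrableOn_pow_mul_exp hκ hq b).const_mul (rexp C)).mul_prod
      (integrableOn_pow_mul_exp hκ hq b')
  have hmeas : MeasurableSet (Ioi (0 : ℝ) ×ˢ Ioi (0 : ℝ)) :=
    measurableSet_Ioi.prod measurableSet_Ioi
  refine hmajorant.mono' (ContinuousOn.aestronglyMeasurable ?_ hmeas)
    ((ae_restrict_iff' hmeas).2 (.of_forall fun p hp ↦
      hE.norm_quadrantIntegrand_ray_le hδ hδ1 hθ hθv (le_of_lt hp.1) hp.2))
  exact hE.continuousOn_quadrantIntegrand.comp
    (f := fun p : ℝ × ℝ ↦ ((p.1 : ℂ), (p.2 * Complex.exp (θ * I) : ℂ))) (by fun_prop)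
    fun p hp ↦ ⟨by simpa using le_of_lt hp.1, (ray_mem_cone hδ1 hθ hp.2).1⟩

lemma integrableOn_quadrantIntegrand (hE : IsPhase q δ κ C E) (hq : 0 < q) (hκ : 0 < κ)
    (hδ : 0 ≤ δ) (hδ1 : δ ≤ 1) :
    IntegrableOn (fun p : ℝ × ℝ ↦ quadrantIntegrand E b b' x v p.1 p.2) (Ioi 0 ×ˢ Ioi 0) := by
  simpa using hE.integrableOn_quadrantIntegrand_ray (θ := 0) (b := b) (b' := b') (x := x) (v := v)
    hq hκ hδ hδ1 (by simpa using by linarith) (by simp)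

lemma integral_quadrantIntegrand_right_eq (hE : IsPhase q δ κ C E) (hq : 0 < q) (hκ : 0 < κ)
    (hδ : 0 ≤ δ) (hδ1 : δ ≤ 1) (hθ : |θ| ≤ δ / 2) (hθv : θ * v ≤ 0) {t : ℝ} (ht : 0 < t) :
    ∫ r in Ioi (0 : ℝ), quadrantIntegrand E b b' x v t r =
      Complex.exp (θ * I) *
        ∫ r in Ioi (0 : ℝ), quadrantIntegrand E b b' x v t (r * Complex.exp (θ * I)) := by
  have hsub (φ : ℝ) (hφ : φ ∈ [[0, θ]]) : |φ| ≤ δ / 2 ∧ φ * v ≤ 0 := by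
    refine ⟨(by simpa using abs_sub_left_of_mem_uIcc hφ : |φ| ≤ |θ|).trans hθ, ?_⟩
    rcases mem_uIcc.1 hφ with ⟨h₁, h₂⟩ | ⟨h₁, h₂⟩
    · rcases le_total v 0 with hv | hv <;> nlinarith
    · rcases le_total v 0 with hv | hv <;> nlinarith
  refine integral_Ioi_eq_exp_mul_integral_ray (g := fun c ↦ quadrantIntegrand E b b' x v t c)
    (B := fun r ↦ rexp C * (t ^ b * rexp (-κ * t ^ q)) * (r ^ b' * rexp (-κ * r ^ q)))
    (fun r hr φ hφ ↦ ?_) (fun r hr φ hφ ↦ ?_) ((integrableOn_pow_mul_exp hκ hq b').const_mul _)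
    ?_ ?_
  · exact hE.differentiableAt_quadrantIntegrand_right (by simpa using ht)
      (ray_mem_cone hδ1 (hsub φ hφ).1 hr).1
  · exact hE.norm_quadrantIntegrand_ray_le hδ hδ1 (hsub φ hφ).1 (hsub φ hφ).2 ht.le hr
  · have := (tendsto_pow_mul_exp hκ hq (b' + 1)).const_mul (rexp C * (t ^ b * rexp (-κ * t ^ q)))
    rw [mul_zero] at this
    exact this.congr fun r ↦ by ring
  · have hcont : Continuous fun r : ℝ ↦
        r * (rexp C * (t ^ b * rexp (-κ * t ^ q)) * (r ^ b' * rexp (-κ * r ^ q))) := by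
      have := continuous_id.rpow_const fun r : ℝ ↦ Or.inr hq.le
      fun_prop
    exact (hcont.tendsto' 0 0 (zero_mul _)).mono_left nhdsWithin_le_nhds

lemma integrableOn_partialFourier_ray (hE : IsPhase q δ κ C E) (hq : 0 < q) (hκ : 0 < κ)
    (hδ : 0 ≤ δ) (hδ1 : δ ≤ 1) (hθ : |θ| ≤ δ / 2) (hθv : θ * v ≤ 0) :
    IntegrableOn (fun r : ℝ ↦ partialFourier E b x (r * Complex.exp (θ * I)) *
      ((r * Complex.exp (θ * I)) ^ b' *
        Complex.exp (-(r * Complex.exp (θ * I) * v * I)))) (Ioi 0) := by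
  have hint :=
    hE.integrableOn_quadrantIntegrand_ray (b := b) (b' := b') (x := x) hq hκ hδ hδ1 hθ hθv
  rw [IntegrableOn, Measure.volume_eq_prod, ← Measure.prod_restrict] at hint
  simpa only [IntegrableOn, integral_quadrantIntegrand_left] using hint.integral_prod_right

lemma quadrantIntegral_eq_integral_ray (hE : IsPhase q δ κ C E) (hq : 0 < q) (hκ : 0 < κ)
    (hδ : 0 ≤ δ) (hδ1 : δ ≤ 1) (hθ : |θ| ≤ δ / 2) (hθv : θ * v ≤ 0) :
    quadrantIntegral E b b' x v = Complex.exp (θ * I) * ∫ r in Ioi (0 : ℝ),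
      partialFourier E b x (r * Complex.exp (θ * I)) * ((r * Complex.exp (θ * I)) ^ b' *
        Complex.exp (-(r * Complex.exp (θ * I) * v * I))) := by
  have hint :=
    hE.integrableOn_quadrantIntegrand_ray (b := b) (b' := b') (x := x) hq hκ hδ hδ1 hθ hθv
  rw [IntegrableOn, Measure.volume_eq_prod, ← Measure.prod_restrict] at hint
  calc quadrantIntegral E b b' x v
      = ∫ t in Ioi (0 : ℝ), ∫ r in Ioi (0 : ℝ), quadrantIntegrand E b b' x v t r :=
        setIntegral_prod _ (hE.integrableOn_quadrantIntegrand hq hκ hδ hδ1)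
    _ = ∫ t in Ioi (0 : ℝ), Complex.exp (θ * I) *
          ∫ r in Ioi (0 : ℝ), quadrantIntegrand E b b' x v t (r * Complex.exp (θ * I)) :=
        setIntegral_congr_fun measurableSet_Ioi fun t ht ↦
          hE.integral_quadrantIntegrand_right_eq hq hκ hδ hδ1 hθ hθv ht
    _ = _ := by
        rw [integral_const_mul, integral_integral_swap hint]
        simp only [integral_quadrantIntegrand_left]

end IsPhase

end Rotation

section RadialDecay

variable {κ p q ρ ε x y : ℝ}

lemma rpow_mul_exp_neg_mul_le (hp : 0 < p) (hκ : 0 < κ) (hy : 0 ≤ y) :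
    y ^ p * rexp (-κ * y) ≤ (p / κ) ^ p := by
  have hbase : κ * y / p ≤ rexp (κ * y / p) := by linarith [add_one_le_exp (κ * y / p)]
  calc y ^ p * rexp (-κ * y) = (p / κ * (κ * y / p)) ^ p * rexp (-κ * y) := by field_simp
    _ = (p / κ) ^ p * ((κ * y / p) ^ p * rexp (-κ * y)) := by
        rw [mul_rpow (by positivity) (by positivity), mul_assoc]
    _ ≤ (p / κ) ^ p * (rexp (κ * y / p) ^ p * rexp (-κ * y)) := by gcongr
    _ = (p / κ) ^ p := by
        rw [← exp_mul, div_mul_cancel₀ _ hp.ne', ← exp_add, neg_mul, add_neg_cancel, exp_zero,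
          mul_one]

lemma rpow_mul_exp_neg_mul_rpow_le (hp : 0 < p) (hq : 0 < q) (hκ : 0 < κ) (hy : 0 ≤ y) :
    y ^ p * rexp (-κ * y ^ q) ≤ (p / q / κ) ^ (p / q) := by
  have := rpow_mul_exp_neg_mul_le (div_pos hp hq) hκ (rpow_nonneg hy q)
  rwa [← rpow_mul hy, mul_div_cancel₀ _ hq.ne'] at this

lemma exists_rpow_mul_exp_mul_exp_le (hp : 0 < p) (hq : 0 < q) (hκ : 0 < κ) (hρ : 0 < ρ) :
    ∃ A, 0 ≤ A ∧ ∀ r > 0, ∀ V ≥ 0,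
      r ^ p * rexp (-ρ * (r * V)) * rexp (-κ * r ^ q) ≤ A * (1 + V) ^ (-p) := by
  refine ⟨2 ^ p * ((p / q / κ) ^ (p / q) + (p / ρ) ^ p), by positivity, fun r hr V hV ↦ ?_⟩
  rw [rpow_neg (by positivity), ← div_eq_mul_inv, le_div_iff₀ (by positivity)]
  have hradial := rpow_mul_exp_neg_mul_rpow_le hp hq hκ hr.le
  have hlinear := rpow_mul_exp_neg_mul_le hp hρ (mul_nonneg hr.le hV)
  have hexp : rexp (-κ * r ^ q) ≤ 1 := exp_le_one_iff.2 (by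
    rw [neg_mul, neg_nonpos]
    positivity)
  have hexp' : rexp (-ρ * (r * V)) ≤ 1 := exp_le_one_iff.2 (by
    rw [neg_mul, neg_nonpos]
    positivity)
  rcases le_total V 1 with hV1 | hV1
  · calc _ ≤ r ^ p * 1 * rexp (-κ * r ^ q) * 2 ^ p := by gcongr; linarith
      _ = 2 ^ p * (r ^ p * rexp (-κ * r ^ q)) := by ring
      _ ≤ _ := by
        gcongr
        exact hradial.trans (le_add_of_nonneg_right (by positivity))
  · calc _ ≤ r ^ p * rexp (-ρ * (r * V)) * 1 * (2 * V) ^ p := by gcongr; linarith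
      _ = 2 ^ p * ((r * V) ^ p * rexp (-ρ * (r * V))) := by
        rw [mul_rpow two_pos.le hV, mul_rpow hr.le hV]
        ring
      _ ≤ _ := by
        gcongr
        exact hlinear.trans (le_add_of_nonneg_left (by positivity))

lemma integrableOn_rpow_mul_min_inv_one (hε : 0 < ε) (hε1 : ε < 1) :
    IntegrableOn (fun u : ℝ ↦ u ^ (-ε) * min u⁻¹ 1) (Ioi 0) := by
  have hmeas : Measurable fun u : ℝ ↦ u ^ (-ε) * min u⁻¹ 1 := by fun_prop
  rw [← Ioc_union_Ioi_eq_Ioi (zero_le_one' ℝ)]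
  refine IntegrableOn.union ?_ ?_
  · have hnear : IntegrableOn (fun u : ℝ ↦ u ^ (-ε)) (Ioc 0 1) := by
      rw [← intervalIntegrable_iff_integrableOn_Ioc_of_le zero_le_one]
      exact intervalIntegral.intervalIntegrable_rpow' (by linarith)
    refine hnear.mono' hmeas.aestronglyMeasurable
      ((ae_restrict_iff' measurableSet_Ioc).2 (.of_forall fun u hu ↦ ?_))
    have hu0 : 0 < u := hu.1
    rw [norm_of_nonneg (by positivity)]
    exact mul_le_of_le_one_right (by positivity) (min_le_right _ _)
  · have hfar : IntegrableOn (fun u : ℝ ↦ u ^ (-ε - 1)) (Ioi 1) :=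
      integrableOn_Ioi_rpow_of_lt (by linarith) one_pos
    refine hfar.mono' hmeas.aestronglyMeasurable
      ((ae_restrict_iff' measurableSet_Ioi).2 (.of_forall fun u hu ↦ ?_))
    have hu0 : 0 < u := one_pos.trans hu
    rw [norm_of_nonneg (by positivity), rpow_sub_one hu0.ne', div_eq_mul_inv]
    gcongr
    exact min_le_left _ _

lemma rpow_mul_min_inv_one_eqOn (hx : 0 < x) :
    EqOn (fun r : ℝ ↦ r ^ (-ε) * min (x * r)⁻¹ 1)
      (fun r ↦ x ^ ε * ((x * r) ^ (-ε) * min (x * r)⁻¹ 1)) (Ioi 0) := fun r hr ↦ by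
  simp only [mul_rpow hx.le (le_of_lt hr)]
  rw [← mul_assoc, ← mul_assoc, ← rpow_add hx, add_neg_cancel, rpow_zero, one_mul]

lemma integrableOn_rpow_mul_min_inv_mul_one (hε : 0 < ε) (hε1 : ε < 1) (hx : 0 < x) :
    IntegrableOn (fun r : ℝ ↦ r ^ (-ε) * min (x * r)⁻¹ 1) (Ioi 0) := by
  refine (integrableOn_congr_fun (rpow_mul_min_inv_one_eqOn hx) measurableSet_Ioi).2
    (Integrable.const_mul ?_ _)
  exact (integrableOn_Ioi_comp_mul_left_iff (fun u : ℝ ↦ u ^ (-ε) * min u⁻¹ 1) 0 hx).2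
    (by simpa using integrableOn_rpow_mul_min_inv_one hε hε1)

lemma integral_rpow_mul_min_inv_mul_one (hx : 0 < x) :
    ∫ r in Ioi (0 : ℝ), r ^ (-ε) * min (x * r)⁻¹ 1 =
      x ^ (ε - 1) * ∫ u in Ioi (0 : ℝ), u ^ (-ε) * min u⁻¹ 1 := by
  have hscale := integral_comp_mul_left_Ioi (fun u : ℝ ↦ u ^ (-ε) * min u⁻¹ 1) 0 hx
  rw [mul_zero, smul_eq_mul] at hscale
  rw [setIntegral_congr_fun measurableSet_Ioi (rpow_mul_min_inv_one_eqOn hx), integral_const_mul,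
    hscale, ← mul_assoc, rpow_sub_one hx.ne', div_eq_mul_inv]

end RadialDecay

section QuadrantBound

variable {q δ κ C ε θ x v : ℝ} {b b' : ℕ}

lemma exists_angle (hδ : 0 ≤ δ) (v : ℝ) :
    ∃ θ, |θ| = δ ∧ θ * v ≤ 0 ∧ v * sin θ = -sin δ * |v| := by
  rcases le_total 0 v with hv | hv
  · refine ⟨-δ, by rw [abs_neg, abs_of_nonneg hδ], by nlinarith, ?_⟩
    rw [sin_neg, abs_of_nonneg hv]
    ring
  · refine ⟨δ, abs_of_nonneg hδ, mul_nonpos_of_nonneg_of_nonpos hδ hv, ?_⟩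
    rw [abs_of_nonpos hv]
    ring

/-- The radial profile that dominates the rotated sum of the two quadrant integrals. -/
noncomputable def radialProfile (q κ ε m x r : ℝ) : ℝ :=
  rexp (-x) * (r ^ (-ε) * rexp (-κ * r ^ q)) + x ^ (-m) * (r ^ (-ε) * min (x * r)⁻¹ 1)

lemma integrableOn_radialProfile (hq : 0 < q) (hκ : 0 < κ) (hε : 0 < ε) (hε1 : ε < 1) (m : ℝ)
    (hx : 0 < x) : IntegrableOn (radialProfile q κ ε m x) (Ioi 0) :=
  ((integrableOn_rpow_mul_exp_neg_mul_rpow (by linarith) hq hκ).const_mul _).add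
    ((integrableOn_rpow_mul_min_inv_mul_one hε hε1 hx).const_mul _)

lemma exists_integral_radialProfile_le (hq : 0 < q) (hκ : 0 < κ) (hε : 0 < ε) (hε1 : ε < 1)
    {m : ℝ} (hm : 0 < m) : ∃ A, 0 ≤ A ∧ ∀ x > 0,
      ∫ r in Ioi (0 : ℝ), radialProfile q κ ε m x r ≤ A * x ^ (-(m + 1 - ε)) := by
  have hn : 0 < m + 1 - ε := by linarith
  set J := ∫ r in Ioi (0 : ℝ), r ^ (-ε) * rexp (-κ * r ^ q)
  set K := ∫ u in Ioi (0 : ℝ), u ^ (-ε) * min u⁻¹ 1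
  have hJ : 0 ≤ J := setIntegral_nonneg measurableSet_Ioi fun r hr ↦
    mul_nonneg (rpow_nonneg (le_of_lt hr) _) (exp_pos _).le
  have hK : 0 ≤ K := setIntegral_nonneg measurableSet_Ioi fun u hu ↦
    mul_nonneg (rpow_nonneg (le_of_lt hu) _) (le_min (inv_nonneg.2 (le_of_lt hu)) zero_le_one)
  refine ⟨(m + 1 - ε) ^ (m + 1 - ε) * J + K, by positivity, fun x hx ↦ ?_⟩
  have hexp : rexp (-x) ≤ (m + 1 - ε) ^ (m + 1 - ε) * x ^ (-(m + 1 - ε)) := by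
    rw [rpow_neg hx.le, ← div_eq_mul_inv, le_div_iff₀ (by positivity), mul_comm]
    simpa using rpow_mul_exp_neg_mul_le hn one_pos hx.le
  calc ∫ r in Ioi (0 : ℝ), radialProfile q κ ε m x r
      = rexp (-x) * J + x ^ (-m) * (x ^ (ε - 1) * K) := by
        unfold radialProfile
        rw [integral_add
          ((integrableOn_rpow_mul_exp_neg_mul_rpow (by linarith) hq hκ).const_mul _)
          ((integrableOn_rpow_mul_min_inv_mul_one hε hε1 hx).const_mul _),
          integral_const_mul, integral_const_mul, integral_rpow_mul_min_inv_mul_one hx]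
    _ = rexp (-x) * J + x ^ (-(m + 1 - ε)) * K := by
        rw [← mul_assoc, ← rpow_add hx]
        ring_nf
    _ ≤ (m + 1 - ε) ^ (m + 1 - ε) * x ^ (-(m + 1 - ε)) * J + x ^ (-(m + 1 - ε)) * K := by gcongr
    _ = _ := by ring

lemma exists_norm_ray_integrand_le (hq : 0 < q) (hκ : 0 < κ) (hδ : 0 < δ) (hδ1 : δ ≤ 1)
    (hP : IsPhase q δ κ C (samePhase q)) (hN : IsPhase q δ κ C (oppositePhase q))
    (hε : 0 < ε) (b b' : ℕ) :
    ∃ A, 0 ≤ A ∧ ∀ x > 0, ∀ v θ : ℝ, |θ| ≤ δ / 2 → v * sin θ = -sin (δ / 2) * |v| →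
    ∀ r > (0 : ℝ),
      ‖(partialFourier (samePhase q) b x (r * Complex.exp (θ * I)) +
          (-1) ^ b * partialFourier (oppositePhase q) b (-x) (r * Complex.exp (θ * I))) *
        ((r * Complex.exp (θ * I)) ^ b' * Complex.exp (-(r * Complex.exp (θ * I) * v * I)))‖ ≤
      A * (1 + |v|) ^ (-(b' + ε)) * radialProfile q (κ / 2) ε (b + q + 1) x r := by
  have hρ : 0 < sin (δ / 2) := sin_pos_of_pos_of_lt_pi (by linarith) (by linarith [pi_gt_three])
  obtain ⟨A, hA, hfourier⟩ := exists_norm_partialFourier_add_le hq hκ hδ.le hδ1 hP hN b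
  obtain ⟨D, hD, hdecay⟩ :=
    exists_rpow_mul_exp_mul_exp_le (p := b' + ε) (by positivity) hq (half_pos hκ) hρ
  refine ⟨A * D, by positivity, fun x hx v θ hθ hv r hr ↦ ?_⟩
  have hnorm : ‖(r * Complex.exp (θ * I) : ℂ)‖ = r := by
    simp [Complex.norm_exp_ofReal_mul_I, abs_of_pos hr]
  have hbound := hfourier x hx _ (ray_mem_cone hδ1 hθ hr)
  have hdecay' := hdecay r hr |v| (abs_nonneg v)
  rw [norm_mul, norm_mul, norm_pow, norm_exp_neg_ray, hv]
  rw [hnorm] at hbound ⊢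
  have hpow : r ^ b' = r ^ (b' + ε) * r ^ (-ε) := by
    rw [← rpow_add hr, add_neg_cancel_right, rpow_natCast]
  have hhalf : rexp (-κ * r ^ q) = rexp (-(κ / 2) * r ^ q) * rexp (-(κ / 2) * r ^ q) := by
    rw [← exp_add]
    ring_nf
  have hle : rexp (-(κ / 2) * r ^ q) ≤ 1 := exp_le_one_iff.2 (by
    rw [neg_mul, neg_nonpos]
    positivity)
  set e := rexp (-(κ / 2) * r ^ q)
  set μ := min (x * r)⁻¹ 1
  have hμ : 0 ≤ μ := by positivity
  calc _ ≤ A * rexp (-κ * r ^ q) * (rexp (-x) + x ^ (-(b + q + 1)) * μ) *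
        (r ^ b' * rexp (r * (-sin (δ / 2) * |v|))) := by gcongr
    _ = A * (r ^ (b' + ε) * rexp (-sin (δ / 2) * (r * |v|)) * e) *
        (rexp (-x) * (r ^ (-ε) * e) + x ^ (-(b + q + 1)) * (r ^ (-ε) * (e * μ))) := by
        rw [hpow, hhalf, mul_left_comm r]
        ring
    _ ≤ A * (D * (1 + |v|) ^ (-(b' + ε))) *
        (rexp (-x) * (r ^ (-ε) * e) + x ^ (-(b + q + 1)) * (r ^ (-ε) * μ)) := by
        gcongr
        exact mul_le_of_le_one_left hμ hle
    _ = _ := by rw [radialProfile]; ring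

/- The factor `r ^ (-ε)` traded for decay in `v` is paid for by the scaling of `min (x * r)⁻¹ 1`. -/
lemma exists_norm_quadrantIntegral_add_le (hq : 0 < q) (hκ : 0 < κ) (hδ : 0 < δ) (hδ1 : δ ≤ 1)
    (hP : IsPhase q δ κ C (samePhase q)) (hN : IsPhase q δ κ C (oppositePhase q))
    (hε : 0 < ε) (hε1 : ε < 1) (b b' : ℕ) :
    ∃ A, 0 ≤ A ∧ ∀ x > 0, ∀ v : ℝ,
      ‖quadrantIntegral (samePhase q) b b' x v +
          (-1) ^ b * quadrantIntegral (oppositePhase q) b b' (-x) v‖ ≤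
        A * x ^ (-(b + q + 2 - ε)) * (1 + |v|) ^ (-(b' + ε)) := by
  obtain ⟨A, hA, hray⟩ := exists_norm_ray_integrand_le hq hκ hδ hδ1 hP hN hε b b'
  obtain ⟨J, hJ, hprofile⟩ := exists_integral_radialProfile_le hq (half_pos hκ) hε hε1
    (m := b + q + 1) (by positivity)
  refine ⟨A * J, by positivity, fun x hx v ↦ ?_⟩
  obtain ⟨θ, hθ, hθv, hv⟩ := exists_angle (half_pos hδ).le v
  have hsum : quadrantIntegral (samePhase q) b b' x v +
      (-1) ^ b * quadrantIntegral (oppositePhase q) b b' (-x) v =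
      Complex.exp (θ * I) * ∫ r in Ioi (0 : ℝ),
        (partialFourier (samePhase q) b x (r * Complex.exp (θ * I)) +
          (-1) ^ b * partialFourier (oppositePhase q) b (-x) (r * Complex.exp (θ * I))) *
        ((r * Complex.exp (θ * I)) ^ b' *
          Complex.exp (-(r * Complex.exp (θ * I) * v * I))) := by
    rw [hP.quadrantIntegral_eq_integral_ray hq hκ hδ.le hδ1 hθ.le hθv,
      hN.quadrantIntegral_eq_integral_ray hq hκ hδ.le hδ1 hθ.le hθv, mul_left_comm, ← mul_add,
      ← integral_const_mul, ← integral_add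
        (hP.integrableOn_partialFourier_ray hq hκ hδ.le hδ1 hθ.le hθv)
        ((hN.integrableOn_partialFourier_ray hq hκ hδ.le hδ1 hθ.le hθv).const_mul _)]
    simp only [add_mul, mul_assoc]
  rw [hsum, norm_mul, Complex.norm_exp_ofReal_mul_I, one_mul]
  calc _ ≤ ∫ r in Ioi (0 : ℝ), A * (1 + |v|) ^ (-(b' + ε)) *
        radialProfile q (κ / 2) ε (b + q + 1) x r :=
        norm_integral_le_of_norm_le
          ((integrableOn_radialProfile hq (half_pos hκ) hε hε1 _ hx).const_mul _)
          ((ae_restrict_iff' measurableSet_Ioi).2 (.of_forall fun r hr ↦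
            hray x hx v θ hθ.le hv r hr))
    _ ≤ A * (1 + |v|) ^ (-(b' + ε)) * (J * x ^ (-(b + q + 1 + 1 - ε))) := by
        rw [integral_const_mul]
        gcongr
        exact hprofile x hx
    _ = _ := by ring_nf

end QuadrantBound

section Kernel

variable {s a c : ℝ}

lemma Mker_comm (s ξ η : ℝ) : Mker s ξ η = Mker s η ξ := by
  have := intervalIntegral.integral_comp_sub_left (a := 0) (b := 1)
    (fun τ : ℝ ↦ |(η - ξ) * τ + ξ| ^ (2 * s)) 1
  rw [sub_self, sub_zero] at this
  rw [Mker, Mker, ← this]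
  ring_nf

lemma Mker_neg_neg (s ξ η : ℝ) : Mker s (-ξ) (-η) = Mker s ξ η := by
  have hneg (τ : ℝ) : (-ξ - -η) * τ + -η = -((ξ - η) * τ + η) := by ring
  simp only [Mker, hneg, abs_neg]

lemma Mker_eq_samePhase (ha : 0 < a) (hc : 0 < c) : (Mker s a c : ℂ) = samePhase (2 * s) a c := by
  rw [samePhase, Mker, ← intervalIntegral.integral_ofReal]
  refine intervalIntegral.integral_congr fun τ hτ ↦ ?_
  rw [uIcc_of_le zero_le_one] at hτ
  have hpos : 0 ≤ (a - c) * τ + c := by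
    nlinarith [mul_nonneg ha.le hτ.1, mul_nonneg hc.le (sub_nonneg.2 hτ.2)]
  simp only [abs_of_nonneg hpos, Complex.ofReal_cpow hpos]
  push_cast
  rfl

lemma integral_zero_abs_rpow {q d : ℝ} (hq : 0 < q) (hd : 0 ≤ d) :
    ∫ y in (0 : ℝ)..d, |y| ^ q = d ^ (1 + q) / (1 + q) := by
  have habs : EqOn (fun y : ℝ ↦ |y| ^ q) (fun y ↦ y ^ q) [[0, d]] := fun y hy ↦ by
    rw [uIcc_of_le hd] at hy
    simp only [abs_of_nonneg hy.1]
  rw [intervalIntegral.integral_congr habs, integral_rpow (.inl (by linarith)),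
    zero_rpow (by linarith), sub_zero, add_comm q]

lemma Mker_neg_left (hs : 0 < s) (ha : 0 < a) (hc : 0 < c) :
    Mker s (-a) c = (a ^ (1 + 2 * s) + c ^ (1 + 2 * s)) / ((1 + 2 * s) * (a + c)) := by
  have hcont : Continuous fun y : ℝ ↦ |y| ^ (2 * s) :=
    continuous_abs.rpow_const fun _ ↦ .inr (by positivity)
  have hsubst : Mker s (-a) c = (a + c)⁻¹ * ∫ y in -a..c, |y| ^ (2 * s) := by
    have := intervalIntegral.integral_comp_mul_add (a := 0) (b := 1)
      (fun y : ℝ ↦ |y| ^ (2 * s)) (c := c - -a) (by linarith) (-a)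
    rw [Mker_comm, Mker, this, smul_eq_mul]
    ring_nf
  have hneg : ∫ y in -a..0, |y| ^ (2 * s) = ∫ y in (0 : ℝ)..a, |y| ^ (2 * s) := by
    simpa using (intervalIntegral.integral_comp_neg (a := 0) (b := a)
      (fun y : ℝ ↦ |y| ^ (2 * s))).symm
  rw [hsubst, ← intervalIntegral.integral_add_adjacent_intervals
    (hcont.intervalIntegrable _ 0) (hcont.intervalIntegrable 0 _), hneg,
    integral_zero_abs_rpow (by positivity) ha.le, integral_zero_abs_rpow (by positivity) hc.le]
  field_simp

lemma Mker_neg_eq_oppositePhase (hs : 0 < s) (ha : 0 < a) (hc : 0 < c) :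
    (Mker s (-a) c : ℂ) = oppositePhase (2 * s) a c := by
  rw [Mker_neg_left hs ha hc, oppositePhase, ← Complex.ofReal_cpow ha.le,
    ← Complex.ofReal_cpow hc.le]
  push_cast
  rfl

end Kernel

section Integrand

variable {s x v : ℝ} {b₁ b₂ : ℕ}

/-- The integrand of `∂_x^{b₁} ∂_v^{b₂} K(1, x, v)`, up to sign. -/
noncomputable def derivIntegrand (s : ℝ) (b₁ b₂ : ℕ) (x v : ℝ) (p : ℝ × ℝ) : ℂ :=
  (p.1 : ℂ) ^ b₁ * (p.2 : ℂ) ^ b₂ * Complex.exp (-(Mker s p.1 p.2 : ℂ)) *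
    Complex.exp (-Complex.I * ((p.1 * x + p.2 * v : ℝ) : ℂ))

open ComplexConjugate in
lemma conj_derivIntegrand (p : ℝ × ℝ) :
    conj (derivIntegrand s b₁ b₂ x v p) = derivIntegrand s b₁ b₂ (-x) (-v) p := by
  simp only [derivIntegrand, map_mul, map_pow, Complex.conj_ofReal, ← Complex.exp_conj, map_neg,
    Complex.conj_I]
  congr 2
  push_cast
  ring

lemma derivIntegrand_neg (p : ℝ × ℝ) :
    derivIntegrand s b₁ b₂ x v (-p) =
      (-1) ^ (b₁ + b₂) * derivIntegrand s b₁ b₂ (-x) (-v) p := by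
  have hphase : -p.1 * x + -p.2 * v = p.1 * -x + p.2 * -v := by ring
  simp only [derivIntegrand, Prod.fst_neg, Prod.snd_neg, Mker_neg_neg, hphase, Complex.ofReal_neg]
  rw [pow_add, neg_pow (p.1 : ℂ), neg_pow (p.2 : ℂ)]
  ring

lemma derivIntegrand_swap (p : ℝ × ℝ) :
    derivIntegrand s b₁ b₂ x v p.swap = derivIntegrand s b₂ b₁ v x p := by
  simp only [derivIntegrand, Prod.fst_swap, Prod.snd_swap, Mker_comm s p.2, add_comm (p.2 * x)]
  ring

lemma norm_derivIntegrand (p : ℝ × ℝ) :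
    ‖derivIntegrand s b₁ b₂ x v p‖ = ‖derivIntegrand s b₁ b₂ 0 0 p‖ := by
  simp [derivIntegrand, Complex.norm_exp]

lemma derivIntegrand_eq_quadrantIntegrand {p : ℝ × ℝ} (hp : p ∈ Ioi (0 : ℝ) ×ˢ Ioi (0 : ℝ)) :
    derivIntegrand s b₁ b₂ x v p = quadrantIntegrand (samePhase (2 * s)) b₁ b₂ x v p.1 p.2 := by
  have hphase : Complex.exp (-I * ((p.1 * x + p.2 * v : ℝ) : ℂ)) =
      Complex.exp (-(p.1 * x * I)) * Complex.exp (-(p.2 * v * I)) := by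
    rw [← Complex.exp_add]
    push_cast
    ring_nf
  rw [derivIntegrand, hphase, Mker_eq_samePhase hp.1 hp.2, quadrantIntegrand, fourierIntegrand]
  ring

lemma derivIntegrand_neg_left_eq_quadrantIntegrand (hs : 0 < s) {p : ℝ × ℝ}
    (hp : p ∈ Ioi (0 : ℝ) ×ˢ Ioi (0 : ℝ)) :
    derivIntegrand s b₁ b₂ x v (-p.1, p.2) =
      (-1) ^ b₁ * quadrantIntegrand (oppositePhase (2 * s)) b₁ b₂ (-x) v p.1 p.2 := by
  have hphase : Complex.exp (-I * ((-p.1 * x + p.2 * v : ℝ) : ℂ)) =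
      Complex.exp (-(p.1 * (-x : ℝ) * I)) * Complex.exp (-(p.2 * v * I)) := by
    rw [← Complex.exp_add]
    push_cast
    ring_nf
  rw [derivIntegrand, hphase, Mker_neg_eq_oppositePhase hs hp.1 hp.2, quadrantIntegrand,
    fourierIntegrand, Complex.ofReal_neg, neg_pow (p.1 : ℂ)]
  ring

end Integrand

section Plane

open ComplexConjugate

variable {s x v : ℝ} {b₁ b₂ : ℕ}

lemma restrict_upperHalf_restrict_rightHalf :
    (volume.restrict (univ ×ˢ Ioi (0 : ℝ))).restrict (Ioi (0 : ℝ) ×ˢ univ) =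
      (volume.restrict (Ioi 0 ×ˢ Ioi 0) : Measure (ℝ × ℝ)) := by
  rw [Measure.restrict_restrict (measurableSet_Ioi.prod .univ), prod_inter_prod, inter_univ,
    univ_inter]

lemma measurePreserving_neg_fst :
    MeasurePreserving (Prod.map Neg.neg id) (volume.restrict (univ ×ˢ Ioi (0 : ℝ)))
      (volume.restrict (univ ×ˢ Ioi (0 : ℝ)) : Measure (ℝ × ℝ)) :=
  ((Measure.measurePreserving_neg (volume : Measure ℝ)).prod
    (MeasurePreserving.id (volume : Measure ℝ))).restrict_preimage
      (MeasurableSet.univ.prod measurableSet_Ioi)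

lemma measurableEmbedding_neg_fst :
    MeasurableEmbedding (Prod.map Neg.neg id : ℝ × ℝ → ℝ × ℝ) :=
  ((MeasurableEquiv.neg ℝ).prodCongr (.refl ℝ)).measurableEmbedding

lemma neg_fst_preimage_rightHalf_compl :
    Prod.map Neg.neg id ⁻¹' (Ioi (0 : ℝ) ×ˢ (univ : Set ℝ))ᶜ
      =ᵐ[volume.restrict (univ ×ˢ Ioi (0 : ℝ))] Ioi (0 : ℝ) ×ˢ univ := by
  have hpreimage :
      Prod.map Neg.neg id ⁻¹' (Ioi (0 : ℝ) ×ˢ (univ : Set ℝ))ᶜ = Ici (0 : ℝ) ×ˢ univ := by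
    ext p; simp
  rw [hpreimage]
  exact ae_restrict_of_ae (Measure.set_prod_ae_eq Ioi_ae_eq_Ici.symm .rfl)

lemma neg_preimage_upperHalf_compl :
    Neg.neg ⁻¹' ((univ : Set ℝ) ×ˢ Ioi (0 : ℝ))ᶜ =ᵐ[volume] univ ×ˢ Ioi (0 : ℝ) := by
  have hpreimage : Neg.neg ⁻¹' ((univ : Set ℝ) ×ˢ Ioi (0 : ℝ))ᶜ = univ ×ˢ Ici (0 : ℝ) := by
    ext p; simp
  rw [hpreimage]
  exact Measure.set_prod_ae_eq .rfl Ioi_ae_eq_Ici.symm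

lemma integrableOn_quadrant_derivIntegrand (hs : 0 < s) :
    IntegrableOn (derivIntegrand s b₁ b₂ x v) (Ioi 0 ×ˢ Ioi 0) := by
  obtain ⟨δ, hδ, hδ1, κ, hκ, C, hP, -⟩ := exists_isPhase (mul_pos two_pos hs)
  exact (hP.integrableOn_quadrantIntegrand (by positivity) hκ hδ.le hδ1).congr_fun
    (fun p hp ↦ (derivIntegrand_eq_quadrantIntegrand hp).symm)
    (measurableSet_Ioi.prod measurableSet_Ioi)

lemma integrableOn_quadrant_derivIntegrand_neg_fst (hs : 0 < s) :
    IntegrableOn (derivIntegrand s b₁ b₂ x v ∘ Prod.map Neg.neg id) (Ioi 0 ×ˢ Ioi 0) := by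
  obtain ⟨δ, hδ, hδ1, κ, hκ, C, -, hN⟩ := exists_isPhase (mul_pos two_pos hs)
  have hint := hN.integrableOn_quadrantIntegrand (b := b₁) (b' := b₂) (x := -x) (v := v)
    (by positivity) hκ hδ.le hδ1
  exact IntegrableOn.congr_fun (hint.const_mul _)
    (fun p hp ↦ (derivIntegrand_neg_left_eq_quadrantIntegrand hs hp).symm)
    (measurableSet_Ioi.prod measurableSet_Ioi)

lemma integrableOn_upperHalf_derivIntegrand (hs : 0 < s) :
    IntegrableOn (derivIntegrand s b₁ b₂ x v) (univ ×ˢ Ioi 0) := by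
  refine integrable_of_reflection measurePreserving_neg_fst measurableEmbedding_neg_fst
    neg_fst_preimage_rightHalf_compl ?_ ?_
  · rw [IntegrableOn, restrict_upperHalf_restrict_rightHalf]
    exact integrableOn_quadrant_derivIntegrand hs
  · rw [IntegrableOn, restrict_upperHalf_restrict_rightHalf]
    exact integrableOn_quadrant_derivIntegrand_neg_fst hs

lemma setIntegral_upperHalf_derivIntegrand (hs : 0 < s) :
    ∫ p in univ ×ˢ Ioi (0 : ℝ), derivIntegrand s b₁ b₂ x v p =
      quadrantIntegral (samePhase (2 * s)) b₁ b₂ x v +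
        (-1) ^ b₁ * quadrantIntegral (oppositePhase (2 * s)) b₁ b₂ (-x) v := by
  have hquadrant := measurableSet_Ioi.prod (measurableSet_Ioi (a := (0 : ℝ))) (s := Ioi (0 : ℝ))
  rw [integral_eq_add_integral_reflection measurePreserving_neg_fst measurableEmbedding_neg_fst
    (measurableSet_Ioi.prod .univ) neg_fst_preimage_rightHalf_compl]
  · rw [restrict_upperHalf_restrict_rightHalf, quadrantIntegral, quadrantIntegral,
      ← integral_const_mul]
    exact congrArg₂ _
      (setIntegral_congr_fun hquadrant fun p hp ↦ derivIntegrand_eq_quadrantIntegrand hp)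
      (setIntegral_congr_fun hquadrant
        fun p hp ↦ derivIntegrand_neg_left_eq_quadrantIntegrand hs hp)
  · rw [IntegrableOn, restrict_upperHalf_restrict_rightHalf]
    exact integrableOn_quadrant_derivIntegrand hs
  · rw [IntegrableOn, restrict_upperHalf_restrict_rightHalf]
    exact integrableOn_quadrant_derivIntegrand_neg_fst hs

lemma derivIntegrand_comp_neg :
    derivIntegrand s b₁ b₂ x v ∘ Neg.neg =
      fun p ↦ (-1) ^ (b₁ + b₂) * derivIntegrand s b₁ b₂ (-x) (-v) p :=
  funext derivIntegrand_neg

lemma integral_derivIntegrand_eq_upperHalf (hs : 0 < s) :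
    ∫ p, derivIntegrand s b₁ b₂ x v p =
      (∫ p in univ ×ˢ Ioi (0 : ℝ), derivIntegrand s b₁ b₂ x v p) +
        (-1) ^ (b₁ + b₂) * conj (∫ p in univ ×ˢ Ioi (0 : ℝ), derivIntegrand s b₁ b₂ x v p) := by
  rw [integral_eq_add_integral_reflection (Measure.measurePreserving_neg volume)
    (MeasurableEquiv.neg (ℝ × ℝ)).measurableEmbedding (MeasurableSet.univ.prod measurableSet_Ioi)
    neg_preimage_upperHalf_compl (integrableOn_upperHalf_derivIntegrand hs), ← integral_conj]
  · simp only [derivIntegrand_neg, conj_derivIntegrand, integral_const_mul]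
  · rw [derivIntegrand_comp_neg]
    exact (integrableOn_upperHalf_derivIntegrand hs).const_mul _

lemma norm_integral_derivIntegrand_neg_neg :
    ‖∫ p, derivIntegrand s b₁ b₂ (-x) (-v) p‖ = ‖∫ p, derivIntegrand s b₁ b₂ x v p‖ := by
  simp_rw [← conj_derivIntegrand, integral_conj, RCLike.norm_conj]

lemma norm_integral_derivIntegrand_le_two_mul (hs : 0 < s) :
    ‖∫ p, derivIntegrand s b₁ b₂ x v p‖ ≤
      2 * ‖quadrantIntegral (samePhase (2 * s)) b₁ b₂ x v +
        (-1) ^ b₁ * quadrantIntegral (oppositePhase (2 * s)) b₁ b₂ (-x) v‖ := by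
  rw [integral_derivIntegrand_eq_upperHalf hs, setIntegral_upperHalf_derivIntegrand hs]
  refine (norm_add_le _ _).trans_eq ?_
  rw [norm_mul, norm_pow, norm_neg, norm_one, one_pow, one_mul, RCLike.norm_conj,
    ← two_mul]

end Plane

section Decay

variable {s x v ε : ℝ}

lemma exists_norm_integral_derivIntegrand_le (hs : 0 < s) (hε : 0 < ε) (hε1 : ε < 1) (b₁ b₂ : ℕ) :
    ∃ A, 0 ≤ A ∧ ∀ x v : ℝ, x ≠ 0 → ‖∫ p, derivIntegrand s b₁ b₂ x v p‖ ≤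
      A * |x| ^ (-(b₁ + 2 * s + 2 - ε)) * (1 + |v|) ^ (-(b₂ + ε)) := by
  have hq := mul_pos two_pos hs
  obtain ⟨δ, hδ, hδ1, κ, hκ, C, hP, hN⟩ := exists_isPhase hq
  obtain ⟨A, hA, hbound⟩ :=
    exists_norm_quadrantIntegral_add_le hq hκ hδ hδ1 hP hN hε hε1 b₁ b₂
  have hpos {x : ℝ} (hx : 0 < x) (v : ℝ) : ‖∫ p, derivIntegrand s b₁ b₂ x v p‖ ≤
      2 * A * x ^ (-(b₁ + 2 * s + 2 - ε)) * (1 + |v|) ^ (-(b₂ + ε)) := by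
    linarith [norm_integral_derivIntegrand_le_two_mul (x := x) (v := v) (b₁ := b₁) (b₂ := b₂) hs,
      hbound x hx v]
  refine ⟨2 * A, by positivity, fun x v hx ↦ ?_⟩
  rcases hx.lt_or_gt with hx | hx
  · rw [← norm_integral_derivIntegrand_neg_neg, abs_of_neg hx, ← abs_neg v]
    exact hpos (neg_pos.2 hx) (-v)
  · rw [abs_of_pos hx]
    exact hpos hx v

lemma exists_norm_integral_derivIntegrand_le_of_abs_le (hs : 0 < s) (hε : 0 < ε) (hε1 : ε < 1)
    (b₁ b₂ : ℕ) :
    ∃ A, 0 ≤ A ∧ ∀ x v : ℝ, |v| ≤ |x| → ‖∫ p, derivIntegrand s b₁ b₂ x v p‖ ≤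
      A * (1 + |x|) ^ (-(b₁ + 2 * s + 2 - ε)) * (1 + |v|) ^ (-(b₂ + ε)) := by
  obtain ⟨A, hA, hlarge⟩ := exists_norm_integral_derivIntegrand_le hs hε hε1 b₁ b₂
  set n : ℝ := b₁ + 2 * s + 2 - ε
  set m : ℝ := b₂ + ε
  set J := ∫ p, ‖derivIntegrand s b₁ b₂ 0 0 p‖
  have hn : 0 ≤ n := by linarith [b₁.cast_nonneg (α := ℝ)]
  have hm : 0 ≤ m := by positivity
  have hJ : 0 ≤ J := integral_nonneg fun _ ↦ norm_nonneg _
  have hsmall (x v : ℝ) : ‖∫ p, derivIntegrand s b₁ b₂ x v p‖ ≤ J :=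
    (norm_integral_le_integral_norm _).trans_eq (by simp only [norm_derivIntegrand]; rfl)
  have htwo {y k : ℝ} (hk : 0 ≤ k) (hy : |y| ≤ 1) : 1 ≤ 2 ^ k * (1 + |y|) ^ (-k) := by
    rw [rpow_neg (by positivity), ← div_eq_mul_inv, one_le_div (by positivity)]
    gcongr
    linarith
  refine ⟨2 ^ n * A + J * (2 ^ n * 2 ^ m), by positivity, fun x v hvx ↦ ?_⟩
  rw [add_mul, add_mul]
  rcases le_total |x| 1 with hx | hx
  · refine le_add_of_nonneg_of_le (by positivity) ((hsmall x v).trans ?_)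
    calc J ≤ J * ((2 ^ n * (1 + |x|) ^ (-n)) * (2 ^ m * (1 + |v|) ^ (-m))) :=
          le_mul_of_one_le_right hJ
            (one_le_mul_of_one_le_of_one_le (htwo hn hx) (htwo hm (hvx.trans hx)))
      _ = _ := by ring
  · have hx0 : 0 < |x| := one_pos.trans_le hx
    refine le_add_of_le_of_nonneg ((hlarge x v (abs_pos.1 hx0)).trans ?_) (by positivity)
    have hrpow : |x| ^ (-n) ≤ 2 ^ n * (1 + |x|) ^ (-n) := by
      calc |x| ^ (-n) ≤ ((1 + |x|) / 2) ^ (-n) :=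
            rpow_le_rpow_of_nonpos (by positivity) (by linarith) (neg_nonpos.2 hn)
        _ = 2 ^ n * (1 + |x|) ^ (-n) := by
            rw [div_rpow (by positivity) two_pos.le, rpow_neg two_pos.le, div_inv_eq_mul, mul_comm]
    calc A * |x| ^ (-n) * (1 + |v|) ^ (-m)
        ≤ A * (2 ^ n * (1 + |x|) ^ (-n)) * (1 + |v|) ^ (-m) := by gcongr
      _ = _ := by ring

lemma one_add_abs_rpow_mul_le {k m m' : ℝ} (hvx : |v| ≤ |x|) (hk : 0 ≤ k) (hm : 0 ≤ m)
    (hm' : 0 ≤ m') :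
    (1 + |x|) ^ (-(k + m)) * (1 + |v|) ^ (-m') ≤
      2 ^ k * √(1 + x ^ 2 + v ^ 2) ^ (-k) * √(1 + x ^ 2) ^ (-m) * √(1 + v ^ 2) ^ (-m') := by
  have hjapanese (y : ℝ) : √(1 + y ^ 2) ≤ 1 + |y| := by
    simpa using sqrt_one_add_norm_sq_le y
  have hxv : √(1 + x ^ 2 + v ^ 2) / 2 ≤ 1 + |x| := by
    rw [div_le_iff₀ two_pos, sqrt_le_left (by positivity)]
    nlinarith [sq_le_sq.2 hvx, sq_abs x, abs_nonneg x]
  have hpos (y : ℝ) : 0 < √(1 + y ^ 2) := by positivity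
  calc (1 + |x|) ^ (-(k + m)) * (1 + |v|) ^ (-m')
      = (1 + |x|) ^ (-k) * (1 + |x|) ^ (-m) * (1 + |v|) ^ (-m') := by
        rw [neg_add, rpow_add (by positivity)]
    _ ≤ (√(1 + x ^ 2 + v ^ 2) / 2) ^ (-k) * √(1 + x ^ 2) ^ (-m) * √(1 + v ^ 2) ^ (-m') := by
        gcongr ?_ * ?_ * ?_
        · exact rpow_le_rpow_of_nonpos (by positivity) hxv (neg_nonpos.2 hk)
        · exact rpow_le_rpow_of_nonpos (hpos x) (hjapanese x) (neg_nonpos.2 hm)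
        · exact rpow_le_rpow_of_nonpos (hpos v) (hjapanese v) (neg_nonpos.2 hm')
    _ = _ := by
        rw [div_rpow (by positivity) two_pos.le, rpow_neg two_pos.le, div_inv_eq_mul,
          mul_comm _ (2 ^ k)]

lemma exists_norm_integral_derivIntegrand_le_weights (hs : 0 < s) (hε : 0 < ε) (hε1 : ε < 1)
    (b₁ b₂ : ℕ) :
    ∃ A, 0 ≤ A ∧ ∀ x v : ℝ, |v| ≤ |x| → ‖∫ p, derivIntegrand s b₁ b₂ x v p‖ ≤
      A * √(1 + x ^ 2 + v ^ 2) ^ (-(2 + 2 * s - 2 * ε)) * √(1 + x ^ 2) ^ (-(ε + b₁)) *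
        √(1 + v ^ 2) ^ (-(ε + b₂)) := by
  obtain ⟨A, hA, hbound⟩ := exists_norm_integral_derivIntegrand_le_of_abs_le hs hε hε1 b₁ b₂
  refine ⟨A * 2 ^ (2 + 2 * s - 2 * ε), by positivity, fun x v hvx ↦ (hbound x v hvx).trans ?_⟩
  have hweights := one_add_abs_rpow_mul_le (k := 2 + 2 * s - 2 * ε) (m := ε + b₁) (m' := ε + b₂)
    hvx (by linarith) (by positivity) (by positivity)
  calc A * (1 + |x|) ^ (-(b₁ + 2 * s + 2 - ε)) * (1 + |v|) ^ (-(b₂ + ε))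
      = A * ((1 + |x|) ^ (-(2 + 2 * s - 2 * ε + (ε + b₁))) * (1 + |v|) ^ (-(ε + b₂))) := by
        ring_nf
    _ ≤ _ := mul_le_mul_of_nonneg_left hweights hA
    _ = _ := by ring

lemma integral_derivIntegrand_swap (s : ℝ) (b₁ b₂ : ℕ) (x v : ℝ) :
    ∫ p, derivIntegrand s b₂ b₁ v x p = ∫ p, derivIntegrand s b₁ b₂ x v p := by
  rw [Measure.volume_eq_prod, ← integral_prod_swap]
  simp only [derivIntegrand_swap]

end Decay

end

theorem stmt0_general (s : ℝ) (hs : 0 < s) (b₁ b₂ : ℕ) (ε : ℝ) (hε : 0 < ε) (hε1 : ε < 1) :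
    ∃ C > (0:ℝ), ∀ x v : ℝ,
      ‖∫ p : ℝ × ℝ,
          (p.1 : ℂ) ^ b₁ * (p.2 : ℂ) ^ b₂ * Complex.exp (-(Mker s p.1 p.2 : ℂ)) *
            Complex.exp (-Complex.I * ((p.1 * x + p.2 * v : ℝ) : ℂ))‖
        ≤ C * Real.sqrt (1 + x ^ 2 + v ^ 2) ^ (-(2 + 2 * s - 2 * ε)) *
            Real.sqrt (1 + x ^ 2) ^ (-(ε + b₁)) *
            Real.sqrt (1 + v ^ 2) ^ (-(ε + b₂)) := by
  obtain ⟨A, hA, hright⟩ := exists_norm_integral_derivIntegrand_le_weights hs hε hε1 b₁ b₂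
  obtain ⟨B, hB, hup⟩ := exists_norm_integral_derivIntegrand_le_weights hs hε hε1 b₂ b₁
  refine ⟨A + B + 1, by positivity, fun x v ↦ ?_⟩
  rcases le_total |v| |x| with hvx | hxv
  · refine (hright x v hvx).trans ?_
    gcongr
    linarith
  · have hswap := hup v x hxv
    rw [integral_derivIntegrand_swap, add_right_comm, mul_right_comm _ (√(1 + v ^ 2) ^ _)] at hswap
    refine hswap.trans ?_
    gcongr
    linarith

theorem stmt0 (s : ℝ) (hs : 0 < s) (hs1 : s < 1) (b₁ b₂ : ℕ) :
    ∃ ε₀ > (0:ℝ), ∀ ε : ℝ, 0 < ε → ε < ε₀ → ∃ C > (0:ℝ), ∀ x v : ℝ,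
      ‖∫ p : ℝ × ℝ,
          (p.1 : ℂ) ^ b₁ * (p.2 : ℂ) ^ b₂ * Complex.exp (-(Mker s p.1 p.2 : ℂ)) *
            Complex.exp (-Complex.I * ((p.1 * x + p.2 * v : ℝ) : ℂ))‖
        ≤ C * Real.sqrt (1 + x ^ 2 + v ^ 2) ^ (-(2 + 2 * s - 2 * ε)) *
            Real.sqrt (1 + x ^ 2) ^ (-(ε + b₁)) *
            Real.sqrt (1 + v ^ 2) ^ (-(ε + b₂)) :=
  ⟨1, one_pos, fun ε hε hε1 ↦ stmt0_general s hs b₁ b₂ ε hε hε1⟩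
end

section
/- Let 0 < s ≤ 1/2, let b₁, a, n₁, n₂ ∈ ℕ, and let χ : ℝ → ℝ be a smooth function with compact support contained in [1/2, 2]. Then there exists a constant C > 0 (depending only on s, b₁, a, n₁, n₂, χ) such that for all integers m₁, m₂ ∈ ℤ with |m₁ − m₂| ≤ 2 and all x, v ∈ ℝ: |x|^{n₁} · |v|^{n₂} · |J_{m₁,m₂}(x,v)| ≤ C · 2^{m₁(2s + b₁ + a − n₁ − n₂)}. -/
open MeasureTheory Real

/-!
The kernel `M` is positive and smooth off the coordinate axes and homogeneous of degree `2s`, so the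
dilation `p = 2^{m₁} q` turns `e^{-M(p)}` into `e^{-t M(q)}` with `t = 2^{2s m₁}` and the dyadic
cutoffs into a fixed bump, up to the finitely many values of `m₁ - m₂`. Since
`∂_η² e^{-tM} = (t² (∂_η M)² - t ∂_η² M) e^{-tM}`, the integral carries at least one factor `t`, the
source of `2^{2s m₁}`. An integration by parts gains a frequency `|x|` or `|v|` and either
differentiates the bump or produces a further factor `t`; as `M` is bounded below on the support of
the bump, every surplus power of `t` is absorbed by `e^{-tM}`, uniformly in `t > 0`.
-/

open TopologicalSpace
open scoped ContDiff Distributions LineDeriv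

section PlaneWave

variable {E : Type*} [NormedAddCommGroup E] [NormedSpace ℝ E]

/-- The plane wave `p ↦ e^{-iℓ(p)}` of frequency `ℓ`, a continuous linear functional: no inner
product and no factor `2π` enter, as in the integrals `J_{m₁,m₂}`. -/
noncomputable def planeWave (ℓ : E →L[ℝ] ℝ) (p : E) : ℂ :=
  Complex.exp (-Complex.I * (ℓ p : ℂ))

lemma norm_planeWave (ℓ : E →L[ℝ] ℝ) (p : E) : ‖planeWave ℓ p‖ = 1 := by
  simp [planeWave, Complex.norm_exp]

lemma planeWave_smul (ℓ : E →L[ℝ] ℝ) (r : ℝ) (p : E) :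
    planeWave ℓ (r • p) = planeWave (r • ℓ) p := by
  simp [planeWave]

lemma hasFDerivAt_planeWave (ℓ : E →L[ℝ] ℝ) (p : E) :
    HasFDerivAt (planeWave ℓ)
      (planeWave ℓ p • (-Complex.I) • (Complex.ofRealCLM ∘L ℓ)) p :=
  ((Complex.ofRealCLM ∘L ℓ).hasFDerivAt.const_mul (-Complex.I)).cexp

lemma continuous_planeWave (ℓ : E →L[ℝ] ℝ) : Continuous (planeWave ℓ) :=
  continuous_iff_continuousAt.2 fun p => (hasFDerivAt_planeWave ℓ p).continuousAt

lemma fderiv_planeWave_apply (ℓ : E →L[ℝ] ℝ) (p v : E) :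
    fderiv ℝ (planeWave ℓ) p v = -Complex.I * ℓ v * planeWave ℓ p := by
  simp [(hasFDerivAt_planeWave ℓ p).fderiv, mul_comm]

variable {Ω : Opens E}

lemma testFunction_lineDeriv_apply (f : 𝓓(Ω, ℝ)) (v p : E) : ∂_{v} f p = fderiv ℝ f p v := by
  rw [TestFunction.lineDerivOp_eq_lineDerivCLM ℝ, TestFunction.lineDerivCLM_apply_of_le le_top,
    (f.contDiff.differentiable (by simp) p).lineDeriv_eq_fderiv]

variable [MeasurableSpace E] [BorelSpace E] {μ : Measure E}

lemma integrable_mul_planeWave [IsFiniteMeasureOnCompacts μ] (f : 𝓓(Ω, ℝ)) (ℓ : E →L[ℝ] ℝ) :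
    Integrable (fun p => (f p : ℂ) * planeWave ℓ p) μ := by
  refine Continuous.integrable_of_hasCompactSupport
    ((Complex.continuous_ofReal.comp f.continuous).mul (continuous_planeWave ℓ)) ?_
  exact (f.hasCompactSupport.comp_left (g := Complex.ofReal) Complex.ofReal_zero).mul_right

lemma abs_mul_norm_integral_mul_planeWave [FiniteDimensional ℝ E] [μ.IsAddHaarMeasure]
    (f : 𝓓(Ω, ℝ)) (ℓ : E →L[ℝ] ℝ) (v : E) :
    |ℓ v| * ‖∫ p, (f p : ℂ) * planeWave ℓ p ∂μ‖ = ‖∫ p, (∂_{v} f p : ℂ) * planeWave ℓ p ∂μ‖ := by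
  have hf (p : E) : HasFDerivAt (fun p => (f p : ℂ)) (Complex.ofRealCLM ∘L fderiv ℝ f p) p :=
    Complex.ofRealCLM.hasFDerivAt.comp p (f.contDiff.differentiable (by simp) p).hasFDerivAt
  have hf' (p : E) : fderiv ℝ (fun p => (f p : ℂ)) p v = (∂_{v} f p : ℂ) := by
    simp [(hf p).fderiv, testFunction_lineDeriv_apply]
  have hwave (p : E) : (f p : ℂ) * fderiv ℝ (planeWave ℓ) p v
      = -Complex.I * ℓ v * ((f p : ℂ) * planeWave ℓ p) := by
    rw [fderiv_planeWave_apply]; ring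
  have parts := integral_mul_fderiv_eq_neg_fderiv_mul_of_integrable (𝕜 := ℂ) (μ := μ)
    (f := fun p => (f p : ℂ)) (g := planeWave ℓ) (v := v)
    (by simpa only [hf'] using integrable_mul_planeWave (∂_{v} f) ℓ)
    (by simpa only [hwave] using (integrable_mul_planeWave f ℓ).const_mul _)
    (integrable_mul_planeWave f ℓ)
    (fun p _ => (hf p).differentiableAt) (fun p _ => (hasFDerivAt_planeWave ℓ p).differentiableAt)
  simp only [hf', hwave, integral_const_mul] at parts
  simpa using congrArg norm parts

end PlaneWave

section DampedIntegral

variable {E : Type*} [NormedAddCommGroup E] [NormedSpace ℝ E] {Ω : Opens E}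

lemma contDiff_mul_of_tsupport_subset {g h : E → ℝ} (hg : ContDiff ℝ ∞ g)
    (hh : ContDiffOn ℝ ∞ h Ω) (hgΩ : tsupport g ⊆ Ω) : ContDiff ℝ ∞ fun p => g p * h p := by
  refine contDiff_iff_contDiffAt.2 fun p => ?_
  by_cases hp : p ∈ tsupport g
  · exact hg.contDiffAt.mul (hh.contDiffAt (Ω.isOpen.mem_nhds (hgΩ hp)))
  · refine contDiffAt_const (c := (0 : ℝ)) |>.congr_of_eventuallyEq ?_
    filter_upwards [notMem_tsupport_iff_eventuallyEq.1 hp] with q hq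
    simp [hq]

/-- The product of a test function on `Ω` with a function that is smooth on `Ω` only, again as a
test function on `Ω`; the values of the second factor off `Ω` are irrelevant. -/
noncomputable def mulSmoothOn (g : 𝓓(Ω, ℝ)) (h : E → ℝ) (hh : ContDiffOn ℝ ∞ h Ω) : 𝓓(Ω, ℝ) where
  toFun p := g p * h p
  contDiff' := contDiff_mul_of_tsupport_subset g.contDiff hh g.tsupport_subset
  hasCompactSupport' := g.hasCompactSupport.mul_right
  tsupport_subset' := tsupport_mul_subset_left.trans g.tsupport_subset

lemma mulSmoothOn_apply (g : 𝓓(Ω, ℝ)) {h : E → ℝ} (hh : ContDiffOn ℝ ∞ h Ω) (p : E) :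
    mulSmoothOn g h hh p = g p * h p := rfl

lemma hasFDerivAt_of_contDiffOn {f : E → ℝ} (hf : ContDiffOn ℝ ∞ f Ω) {p : E} (hp : p ∈ Ω) :
    HasFDerivAt f (fderiv ℝ f p) p :=
  ((hf.contDiffAt (Ω.isOpen.mem_nhds hp)).differentiableAt (by simp)).hasFDerivAt

lemma contDiffOn_fderiv_apply {Φ : E → ℝ} (hΦ : ContDiffOn ℝ ∞ Φ Ω) (v : E) :
    ContDiffOn ℝ ∞ (fun p => fderiv ℝ Φ p v) Ω :=
  (hΦ.fderiv_of_isOpen Ω.isOpen (by simp)).clm_apply contDiffOn_const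

lemma contDiffOn_exp_neg_mul {Φ : E → ℝ} (hΦ : ContDiffOn ℝ ∞ Φ Ω) (t : ℝ) :
    ContDiffOn ℝ ∞ (fun p => exp (-(t * Φ p))) Ω :=
  (contDiffOn_const.mul hΦ).neg.exp

lemma lineDeriv_mulSmoothOn_apply (g : 𝓓(Ω, ℝ)) {h : E → ℝ} (hh : ContDiffOn ℝ ∞ h Ω) (v p : E) :
    ∂_{v} (mulSmoothOn g h hh) p = ∂_{v} g p * h p + g p * fderiv ℝ h p v := by
  simp only [testFunction_lineDeriv_apply]
  by_cases hp : p ∈ tsupport g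
  · have hhp : DifferentiableAt ℝ h p :=
      (hasFDerivAt_of_contDiffOn hh (g.tsupport_subset hp)).differentiableAt
    have hgp : DifferentiableAt ℝ g p := g.contDiff.differentiable (by simp) p
    change fderiv ℝ (fun p => g p * h p) p v = _
    rw [fderiv_fun_mul hgp hhp]
    simp only [add_apply, smul_apply, smul_eq_mul]
    ring
  · have hg : g =ᶠ[nhds p] 0 := notMem_tsupport_iff_eventuallyEq.1 hp
    have hgh : mulSmoothOn g h hh =ᶠ[nhds p] 0 := by
      filter_upwards [hg] with q hq
      simp [mulSmoothOn_apply, hq]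
    simp [hg.fderiv_eq, hgh.fderiv_eq, hg.eq_of_nhds]

lemma exists_pos_le_on_tsupport {Φ : E → ℝ} (hΦ : ContinuousOn Φ Ω)
    (hpos : ∀ p ∈ Ω, 0 < Φ p) (g : 𝓓(Ω, ℝ)) : ∃ c > 0, ∀ p ∈ tsupport g, c ≤ Φ p :=
  g.hasCompactSupport.isCompact.exists_forall_le' (hΦ.mono g.tsupport_subset)
    fun p hp => hpos p (g.tsupport_subset hp)

variable [MeasurableSpace E]

/-- The oscillatory integral `∫ g e^{-tΦ} e^{-iℓ}` with damping `tΦ`. -/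
noncomputable def dampedIntegral (μ : Measure E) (Φ : E → ℝ) (g : 𝓓(Ω, ℝ)) (t : ℝ)
    (ℓ : E →L[ℝ] ℝ) : ℂ :=
  ∫ p, ((g p * exp (-(t * Φ p)) : ℝ) : ℂ) * planeWave ℓ p ∂μ

variable [BorelSpace E] {μ : Measure E} {Φ : E → ℝ}

lemma integrable_dampedIntegral [IsFiniteMeasureOnCompacts μ] (hΦ : ContDiffOn ℝ ∞ Φ Ω)
    (g : 𝓓(Ω, ℝ)) (t : ℝ) (ℓ : E →L[ℝ] ℝ) :
    Integrable (fun p => ((g p * exp (-(t * Φ p)) : ℝ) : ℂ) * planeWave ℓ p) μ :=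
  integrable_mul_planeWave (mulSmoothOn g _ (contDiffOn_exp_neg_mul hΦ t)) ℓ

lemma abs_mul_norm_dampedIntegral_le [FiniteDimensional ℝ E] [μ.IsAddHaarMeasure]
    (hΦ : ContDiffOn ℝ ∞ Φ Ω) (g : 𝓓(Ω, ℝ)) (v : E) {t : ℝ} (ht : 0 ≤ t) (ℓ : E →L[ℝ] ℝ) :
    |ℓ v| * ‖dampedIntegral μ Φ g t ℓ‖ ≤ ‖dampedIntegral μ Φ (∂_{v} g) t ℓ‖ +
      t * ‖dampedIntegral μ Φ (mulSmoothOn g _ (contDiffOn_fderiv_apply hΦ v)) t ℓ‖ := by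
  set G := mulSmoothOn g _ (contDiffOn_exp_neg_mul hΦ t) with hG
  set g' := mulSmoothOn g _ (contDiffOn_fderiv_apply hΦ v) with hg'
  have hderiv (p : E) : ∂_{v} G p =
      ∂_{v} g p * exp (-(t * Φ p)) - t * (g' p * exp (-(t * Φ p))) := by
    rw [hG, lineDeriv_mulSmoothOn_apply, hg', mulSmoothOn_apply]
    by_cases hp : p ∈ Ω
    · rw [((hasFDerivAt_of_contDiffOn hΦ hp).const_mul t).fun_neg.exp.fderiv]
      simp only [neg_apply, smul_apply, smul_eq_mul]
      ring
    · rw [image_eq_zero_of_notMem_tsupport fun h => hp (g.tsupport_subset h)]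
      ring
  have hsplit : ∫ p, (∂_{v} G p : ℂ) * planeWave ℓ p ∂μ =
      dampedIntegral μ Φ (∂_{v} g) t ℓ - t * dampedIntegral μ Φ g' t ℓ := by
    simp only [dampedIntegral]
    rw [← integral_const_mul, ← integral_sub (integrable_dampedIntegral hΦ _ t ℓ)
      ((integrable_dampedIntegral hΦ g' t ℓ).const_mul _)]
    refine integral_congr_ae (.of_forall fun p => ?_)
    simp only [hderiv]
    push_cast
    ring
  calc |ℓ v| * ‖dampedIntegral μ Φ g t ℓ‖
      = ‖∫ p, (∂_{v} G p : ℂ) * planeWave ℓ p ∂μ‖ := abs_mul_norm_integral_mul_planeWave G ℓ v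
    _ ≤ _ := by
      rw [hsplit]
      refine (norm_sub_le _ _).trans_eq ?_
      simp [abs_of_nonneg ht]

lemma pow_mul_exp_neg_mul_le (k : ℕ) {c t : ℝ} (hc : 0 < c) (ht : 0 ≤ t) :
    t ^ k * exp (-(t * c)) ≤ k.factorial / c ^ k := by
  have := pow_div_factorial_le_exp (x := t * c) (by positivity) k
  rw [div_le_iff₀ (by positivity), mul_pow] at this
  rw [exp_neg, ← div_eq_mul_inv, div_le_div_iff₀ (exp_pos _) (by positivity)]
  linarith

lemma exists_pow_mul_norm_dampedIntegral_le [IsFiniteMeasureOnCompacts μ]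
    (hΦ : ContinuousOn Φ Ω) (hpos : ∀ p ∈ Ω, 0 < Φ p) (k : ℕ) (g : 𝓓(Ω, ℝ)) :
    ∃ C, ∀ t > 0, ∀ ℓ : E →L[ℝ] ℝ, t ^ k * ‖dampedIntegral μ Φ g t ℓ‖ ≤ C := by
  obtain ⟨c, hc, hcΦ⟩ := exists_pos_le_on_tsupport hΦ hpos g
  refine ⟨k.factorial / c ^ k * ∫ p, |g p| ∂μ, fun t ht ℓ => ?_⟩
  have hg : Integrable (fun p => |g p|) μ :=
    (g.continuous.integrable_of_hasCompactSupport g.hasCompactSupport).abs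
  have hle : ‖dampedIntegral μ Φ g t ℓ‖ ≤ ∫ p, exp (-(t * c)) * |g p| ∂μ := by
    refine norm_integral_le_of_norm_le (hg.const_mul _) (.of_forall fun p => ?_)
    rw [norm_mul, norm_planeWave, mul_one, Complex.norm_real, norm_eq_abs, abs_mul, abs_exp,
      mul_comm]
    by_cases hp : p ∈ tsupport g
    · gcongr
      exact hcΦ p hp
    · simp [image_eq_zero_of_notMem_tsupport hp]
  calc t ^ k * ‖dampedIntegral μ Φ g t ℓ‖
      ≤ t ^ k * (exp (-(t * c)) * ∫ p, |g p| ∂μ) := by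
        rw [← integral_const_mul]; gcongr
    _ = t ^ k * exp (-(t * c)) * ∫ p, |g p| ∂μ := by ring
    _ ≤ _ := by gcongr; exact pow_mul_exp_neg_mul_le k hc ht.le

-- The power `t ^ k` closes the induction on `vs`: differentiating the damping costs a factor `t`.
theorem exists_prod_abs_mul_norm_dampedIntegral_le [FiniteDimensional ℝ E] [μ.IsAddHaarMeasure]
    (hΦ : ContDiffOn ℝ ∞ Φ Ω) (hpos : ∀ p ∈ Ω, 0 < Φ p) (vs : List E) (k : ℕ) (g : 𝓓(Ω, ℝ)) :
    ∃ C, ∀ t > 0, ∀ ℓ : E →L[ℝ] ℝ,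
      (vs.map fun v => |ℓ v|).prod * (t ^ k * ‖dampedIntegral μ Φ g t ℓ‖) ≤ C := by
  induction vs generalizing k g with
  | nil => simpa using exists_pow_mul_norm_dampedIntegral_le hΦ.continuousOn hpos k g
  | cons v vs ih =>
    obtain ⟨C₁, h₁⟩ := ih k (∂_{v} g)
    obtain ⟨C₂, h₂⟩ := ih (k + 1) (mulSmoothOn g _ (contDiffOn_fderiv_apply hΦ v))
    refine ⟨C₁ + C₂, fun t ht ℓ => ?_⟩
    set P := (vs.map fun v => |ℓ v|).prod
    have hP0 : 0 ≤ P := List.prod_nonneg (by simp +contextual)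
    calc ((v :: vs).map fun v => |ℓ v|).prod * (t ^ k * ‖dampedIntegral μ Φ g t ℓ‖)
        = P * t ^ k * (|ℓ v| * ‖dampedIntegral μ Φ g t ℓ‖) := by
          rw [List.map_cons, List.prod_cons]; ring
      _ ≤ P * t ^ k * (‖dampedIntegral μ Φ (∂_{v} g) t ℓ‖ +
            t * ‖dampedIntegral μ Φ (mulSmoothOn g _ (contDiffOn_fderiv_apply hΦ v)) t ℓ‖) := by
          gcongr; exact abs_mul_norm_dampedIntegral_le hΦ g v ht.le ℓ
      _ = P * (t ^ k * ‖dampedIntegral μ Φ (∂_{v} g) t ℓ‖) + P * (t ^ (k + 1) *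
            ‖dampedIntegral μ Φ (mulSmoothOn g _ (contDiffOn_fderiv_apply hΦ v)) t ℓ‖) := by
          ring
      _ ≤ C₁ + C₂ := add_le_add (h₁ t ht ℓ) (h₂ t ht ℓ)

end DampedIntegral

section HomogeneousPhase

variable {E : Type*} [NormedAddCommGroup E] [NormedSpace ℝ E]

lemma lineDeriv_comp_smul (F : E → ℝ) (r : ℝ) (p w : E) :
    lineDeriv ℝ (fun q => F (r • q)) p w = r * lineDeriv ℝ F (r • p) w := by
  rw [← smul_eq_mul, ← lineDeriv_smul]
  simp only [lineDeriv, smul_add, smul_comm r]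

/-- The second derivative `∂_w² F` along `w`, as an iterated line derivative so that it scales
correctly under dilations without any smoothness assumption on `F`. -/
noncomputable def lineDerivTwo (F : E → ℝ) (w p : E) : ℝ :=
  lineDeriv ℝ (fun q => lineDeriv ℝ F q w) p w

lemma lineDerivTwo_comp_smul (F : E → ℝ) (r : ℝ) (w p : E) :
    lineDerivTwo (fun q => F (r • q)) w p = r ^ 2 * lineDerivTwo F w (r • p) := by
  simp only [lineDerivTwo, lineDeriv_comp_smul F]
  rw [← smul_eq_mul (a := r ^ 2), pow_two, mul_smul, smul_eq_mul r, smul_eq_mul r,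
    ← lineDeriv_comp_smul (fun q => lineDeriv ℝ F q w)]
  simp only [lineDeriv, deriv_const_mul_field]

lemma prod_map_abs_smul_apply (vs : List E) {r : ℝ} (hr : 0 ≤ r) (ℓ : E →L[ℝ] ℝ) :
    (vs.map fun v => |(r • ℓ) v|).prod = r ^ vs.length * (vs.map fun v => |ℓ v|).prod := by
  simp [abs_mul, abs_of_nonneg hr, List.prod_map_mul]

variable {Ω : Opens E} {Φ : E → ℝ}

lemma lineDerivTwo_exp_neg_mul (hΦ : ContDiffOn ℝ ∞ Φ Ω) (t : ℝ) (w : E) {p : E} (hp : p ∈ Ω) :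
    lineDerivTwo (fun q => exp (-(t * Φ q))) w p =
      (t ^ 2 * fderiv ℝ Φ p w ^ 2 - t * fderiv ℝ (fun q => fderiv ℝ Φ q w) p w) *
        exp (-(t * Φ p)) := by
  have hexp {q : E} (hq : q ∈ Ω) :=
    ((hasFDerivAt_of_contDiffOn hΦ hq).const_mul t).fun_neg.exp
  have hfirst : (fun q => lineDeriv ℝ (fun q => exp (-(t * Φ q))) q w) =ᶠ[nhds p]
      fun q => -(exp (-(t * Φ q)) * (t * fderiv ℝ Φ q w)) := by
    filter_upwards [Ω.isOpen.mem_nhds hp] with q hq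
    simp [((hexp hq).hasLineDerivAt w).lineDeriv]
  have hsecond := ((hexp hp).fun_mul
    ((hasFDerivAt_of_contDiffOn (contDiffOn_fderiv_apply hΦ w) hp).const_mul t)).fun_neg
  rw [lineDerivTwo, hfirst.lineDeriv_eq, (hsecond.hasLineDerivAt w).lineDeriv]
  simp only [neg_apply, add_apply, smul_apply, smul_eq_mul]
  ring

variable [MeasurableSpace E] [BorelSpace E] [FiniteDimensional ℝ E] {μ : Measure E}
  [μ.IsAddHaarMeasure]

lemma integral_mul_lineDerivTwo_exp_neg (hΦ : ContDiffOn ℝ ∞ Φ Ω) (A : 𝓓(Ω, ℝ)) (w : E)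
    {r t : ℝ} (hr : 0 < r) (hΦr : ∀ p, Φ (r • p) = t * Φ p) (ℓ : E →L[ℝ] ℝ) :
    r ^ 2 * ∫ p, ((A (r⁻¹ • p) * lineDerivTwo (fun q => exp (-Φ q)) w p : ℝ) : ℂ) *
        planeWave ℓ p ∂μ =
      r ^ Module.finrank ℝ E *
        (t ^ 2 * dampedIntegral μ Φ
            (mulSmoothOn A _ ((contDiffOn_fderiv_apply hΦ w).pow 2)) t (r • ℓ) -
          t * dampedIntegral μ Φ
            (mulSmoothOn A _ (contDiffOn_fderiv_apply (contDiffOn_fderiv_apply hΦ w) w)) t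
            (r • ℓ)) := by
  have hscale (p : E) : r ^ 2 * (A p * lineDerivTwo (fun q => exp (-Φ q)) w (r • p)) =
      t ^ 2 * (A p * fderiv ℝ Φ p w ^ 2 * exp (-(t * Φ p))) -
        t * (A p * fderiv ℝ (fun q => fderiv ℝ Φ q w) p w * exp (-(t * Φ p))) := by
    by_cases hp : p ∈ Ω
    · have := lineDerivTwo_comp_smul (fun q => exp (-Φ q)) r w p
      simp only [hΦr, lineDerivTwo_exp_neg_mul hΦ t w hp] at this
      linear_combination -A p * this
    · rw [image_eq_zero_of_notMem_tsupport fun h => hp (A.tsupport_subset h)]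
      ring
  set f : E → ℂ := fun p =>
    ((A (r⁻¹ • p) * lineDerivTwo (fun q => exp (-Φ q)) w p : ℝ) : ℂ) * planeWave ℓ p
  have hchange : ∫ p, f p ∂μ = r ^ Module.finrank ℝ E * ∫ p, f (r • p) ∂μ := by
    rw [Measure.integral_comp_smul_of_nonneg μ f r (hR := hr.le), Complex.real_smul]
    push_cast
    rw [mul_inv_cancel_left₀ (by simp [hr.ne'])]
  simp only [dampedIntegral]
  rw [hchange, ← integral_const_mul (t ^ 2 : ℂ), ← integral_const_mul (t : ℂ), ← integral_sub
    ((integrable_dampedIntegral hΦ _ t _).const_mul _)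
    ((integrable_dampedIntegral hΦ _ t _).const_mul _), mul_left_comm, ← integral_const_mul]
  congr 2 with p
  have := congrArg (fun u : ℝ => (u : ℂ) * planeWave (r • ℓ) p) (hscale p)
  simp only [f, planeWave_smul, inv_smul_smul₀ hr.ne', mulSmoothOn_apply]
  push_cast at this ⊢
  linear_combination this

lemma pow_mul_norm_integral_mul_lineDerivTwo_exp_neg_le (hΦ : ContDiffOn ℝ ∞ Φ Ω) (A : 𝓓(Ω, ℝ))
    (w : E) {r t : ℝ} (hr : 0 < r) (ht : 0 ≤ t) (hΦr : ∀ p, Φ (r • p) = t * Φ p)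
    (ℓ : E →L[ℝ] ℝ) :
    r ^ 2 * ‖∫ p, ((A (r⁻¹ • p) * lineDerivTwo (fun q => exp (-Φ q)) w p : ℝ) : ℂ) *
        planeWave ℓ p ∂μ‖ ≤
      r ^ Module.finrank ℝ E * (t *
        (t * ‖dampedIntegral μ Φ
            (mulSmoothOn A _ ((contDiffOn_fderiv_apply hΦ w).pow 2)) t (r • ℓ)‖ +
          ‖dampedIntegral μ Φ
            (mulSmoothOn A _ (contDiffOn_fderiv_apply (contDiffOn_fderiv_apply hΦ w) w)) t
            (r • ℓ)‖)) := by
  have hnorm := congrArg norm (integral_mul_lineDerivTwo_exp_neg (μ := μ) hΦ A w hr hΦr ℓ)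
  simp only [norm_mul, norm_pow, Complex.norm_real, norm_of_nonneg hr.le] at hnorm
  rw [hnorm]
  gcongr
  refine (norm_sub_le _ _).trans_eq ?_
  simp only [norm_mul, norm_pow, Complex.norm_real, norm_of_nonneg ht]
  ring

theorem exists_prod_abs_mul_norm_integral_lineDerivTwo_exp_neg_le
    (hΦ : ContDiffOn ℝ ∞ Φ Ω) (hpos : ∀ p ∈ Ω, 0 < Φ p) {d : ℝ}
    (hhom : ∀ r > 0, ∀ p, Φ (r • p) = r ^ d * Φ p) (A : 𝓓(Ω, ℝ)) (w : E) (vs : List E) :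
    ∃ C, ∀ r > 0, ∀ ℓ : E →L[ℝ] ℝ, (vs.map fun v => |ℓ v|).prod *
        ‖∫ p, ((A (r⁻¹ • p) * lineDerivTwo (fun q => exp (-Φ q)) w p : ℝ) : ℂ) *
          planeWave ℓ p ∂μ‖ ≤
      C * r ^ (d + Module.finrank ℝ E - 2 - vs.length) := by
  set A₁ := mulSmoothOn A _ ((contDiffOn_fderiv_apply hΦ w).pow 2)
  set A₂ := mulSmoothOn A _ (contDiffOn_fderiv_apply (contDiffOn_fderiv_apply hΦ w) w)
  obtain ⟨C₁, h₁⟩ := exists_prod_abs_mul_norm_dampedIntegral_le (μ := μ) hΦ hpos vs 1 A₁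
  obtain ⟨C₂, h₂⟩ := exists_prod_abs_mul_norm_dampedIntegral_le (μ := μ) hΦ hpos vs 0 A₂
  refine ⟨C₁ + C₂, fun r hr ℓ => ?_⟩
  set t := r ^ d
  have ht : 0 < t := rpow_pos_of_pos hr d
  have hI := pow_mul_norm_integral_mul_lineDerivTwo_exp_neg_le (μ := μ) hΦ A w hr ht.le
    (hhom r hr) ℓ
  set I := ∫ p, ((A (r⁻¹ • p) * lineDerivTwo (fun q => exp (-Φ q)) w p : ℝ) : ℂ) *
    planeWave ℓ p ∂μ
  set J₁ := dampedIntegral μ Φ A₁ t (r • ℓ)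
  set J₂ := dampedIntegral μ Φ A₂ t (r • ℓ)
  set P := (vs.map fun v => |ℓ v|).prod
  set P' := (vs.map fun v => |(r • ℓ) v|).prod with hP'
  have hP'0 : 0 ≤ P' := List.prod_nonneg (by simp [mul_nonneg])
  have hJ₁ : P' * (t * ‖J₁‖) ≤ C₁ := by simpa only [pow_one] using h₁ t ht (r • ℓ)
  have hJ₂ : P' * ‖J₂‖ ≤ C₂ := by simpa only [pow_zero, one_mul] using h₂ t ht (r • ℓ)
  rw [rpow_sub hr, rpow_sub hr, rpow_add hr, rpow_natCast, rpow_natCast, rpow_two, div_div,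
    mul_div_assoc', le_div_iff₀ (by positivity)]
  calc P * ‖I‖ * (r ^ 2 * r ^ vs.length) = P' * (r ^ 2 * ‖I‖) := by
        rw [hP', prod_map_abs_smul_apply vs hr.le]; ring
    _ ≤ P' * (r ^ Module.finrank ℝ E * (t * (t * ‖J₁‖ + ‖J₂‖))) := by gcongr
    _ = (P' * (t * ‖J₁‖) + P' * ‖J₂‖) * (t * r ^ Module.finrank ℝ E) := by ring
    _ ≤ (C₁ + C₂) * (t * r ^ Module.finrank ℝ E) := by gcongr

end HomogeneousPhase

section Kernel

lemma analyticAt_dslope {𝕜 E : Type*} [NontriviallyNormedField 𝕜] [NormedAddCommGroup E]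
    [NormedSpace 𝕜 E] {f : 𝕜 → E} {a b : 𝕜} (ha : AnalyticAt 𝕜 f a) (hb : AnalyticAt 𝕜 f b) :
    AnalyticAt 𝕜 (dslope f a) b := by
  obtain rfl | hab := eq_or_ne b a
  · obtain ⟨p, hp⟩ := ha
    exact hp.has_fpower_series_dslope_fslope.analyticAt
  · refine AnalyticAt.congr ?_ (dslope_eventuallyEq_slope_of_ne f hab).symm
    exact ((analyticAt_id.sub analyticAt_const).inv (sub_ne_zero.2 hab)).smul
      (hb.sub analyticAt_const)

/-- The primitive `t |t|^p / (p + 1)` of `|t|^p`. -/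
noncomputable def absRpowPrimitive (p t : ℝ) : ℝ := t * |t| ^ p / (p + 1)

lemma contDiffAt_abs_rpow (p : ℝ) {t : ℝ} (ht : t ≠ 0) {n : WithTop ℕ∞} :
    ContDiffAt ℝ n (fun y => |y| ^ p) t := by
  have habs (y : ℝ) : |y| ^ p = (y ^ 2) ^ (p / 2) := by
    rw [← sq_abs, ← rpow_natCast_mul (abs_nonneg y)]
    congr 1
    push_cast
    ring
  simp only [habs]
  exact ContDiffAt.comp t (contDiffAt_rpow_const_of_ne (pow_ne_zero 2 ht)) (contDiffAt_id.pow 2)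

lemma continuous_abs_rpow {p : ℝ} (hp : 0 ≤ p) : Continuous fun t : ℝ => |t| ^ p :=
  continuous_abs.rpow_const fun _ => .inr hp

lemma analyticAt_absRpowPrimitive (p : ℝ) {t : ℝ} (ht : t ≠ 0) :
    AnalyticAt ℝ (absRpowPrimitive p) t :=
  ((contDiffAt_id.mul (contDiffAt_abs_rpow p ht)).div_const (p + 1)).analyticAt

lemma hasDerivAt_absRpowPrimitive {p : ℝ} (hp : p + 1 ≠ 0) {t : ℝ} (ht : t ≠ 0) :
    HasDerivAt (absRpowPrimitive p) (|t| ^ p) t := by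
  have h := ((hasDerivAt_id t).mul ((hasDerivAt_abs ht).rpow_const
    (p := p) (.inl (abs_ne_zero.2 ht)))).div_const (p + 1)
  refine h.congr_deriv ?_
  rw [rpow_sub_one (abs_ne_zero.2 ht), id_eq, one_mul, div_eq_iff hp]
  have := self_mul_sign t
  field_simp
  linear_combination p * this

lemma integral_abs_rpow {p : ℝ} (hp : 0 ≤ p) (a b : ℝ) :
    ∫ y in a..b, |y| ^ p = absRpowPrimitive p b - absRpowPrimitive p a :=
  MeasureTheory.integral_eq_of_hasDerivAt_off_countable (absRpowPrimitive p) _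
    (Set.countable_singleton 0)
    ((continuous_id.mul (continuous_abs_rpow hp)).div_const (p + 1)).continuousOn
    (fun _ ht => hasDerivAt_absRpowPrimitive (by positivity) ht.2)
    ((continuous_abs_rpow hp).intervalIntegrable a b)

lemma Mker_pos {s : ℝ} (hs : 0 < s) (ξ : ℝ) {η : ℝ} (hη : η ≠ 0) : 0 < Mker s ξ η := by
  refine intervalIntegral.integral_pos one_pos ?_ (fun _ _ => by positivity) ⟨0, by simp, ?_⟩
  · exact ((continuous_abs_rpow (by positivity)).comp (by fun_prop)).continuousOn
  · have := abs_pos.2 hη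
    simp only [mul_zero, zero_add]
    positivity

lemma Mker_mul_mul (s r ξ η : ℝ) : Mker s (r * ξ) (r * η) = |r| ^ (2 * s) * Mker s ξ η := by
  rw [Mker, Mker, ← intervalIntegral.integral_const_mul]
  congr 1 with τ
  rw [← mul_rpow (abs_nonneg _) (abs_nonneg _), ← abs_mul]
  congr 2
  ring

lemma Mker_one_right {s : ℝ} (hs : 0 ≤ s) (t : ℝ) :
    Mker s t 1 = dslope (absRpowPrimitive (2 * s)) 1 t := by
  obtain rfl | ht := eq_or_ne t 1
  · rw [dslope_same, (hasDerivAt_absRpowPrimitive (by positivity) one_ne_zero).deriv]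
    simp [Mker]
  · rw [dslope_of_ne _ ht, slope_def_field, Mker, intervalIntegral.integral_comp_mul_add
      (fun y => |y| ^ (2 * s)) (sub_ne_zero.2 ht), integral_abs_rpow (by positivity)]
    simp [div_eq_inv_mul]

/-- The complement of the coordinate axes in the plane. -/
def offAxes : Opens (ℝ × ℝ) where
  carrier := {p | p.1 ≠ 0 ∧ p.2 ≠ 0}
  is_open' := (isOpen_ne_fun continuous_fst continuous_const).inter
    (isOpen_ne_fun continuous_snd continuous_const)

lemma contDiffOn_Mker {s : ℝ} (hs : 0 ≤ s) :
    ContDiffOn ℝ ∞ (fun p : ℝ × ℝ => Mker s p.1 p.2) offAxes := by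
  have hfactor : ∀ p ∈ offAxes, Mker s p.1 p.2 =
      |p.2| ^ (2 * s) * dslope (absRpowPrimitive (2 * s)) 1 (p.1 / p.2) := by
    intro p hp
    rw [← Mker_one_right hs, ← Mker_mul_mul, mul_one, mul_div_cancel₀ _ hp.2]
  refine ContDiffOn.congr (fun p hp => ContDiffAt.contDiffWithinAt ?_) hfactor
  have hquot : AnalyticAt ℝ (dslope (absRpowPrimitive (2 * s)) 1) (p.1 / p.2) :=
    analyticAt_dslope (analyticAt_absRpowPrimitive _ one_ne_zero)
      (analyticAt_absRpowPrimitive _ (div_ne_zero hp.1 hp.2))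
  exact ((contDiffAt_abs_rpow _ hp.2).comp p contDiffAt_snd).mul
    (hquot.contDiffAt.comp p (contDiffAt_fst.div contDiffAt_snd hp.2))

end Kernel

section LittlewoodPaley

lemma lineDerivTwo_zero_one (F : ℝ × ℝ → ℝ) (p : ℝ × ℝ) :
    lineDerivTwo F (0, 1) p = iteratedDeriv 2 (fun η => F (p.1, η)) p.2 := by
  have hfirst (q : ℝ × ℝ) : lineDeriv ℝ F q (0, 1) = deriv (fun η => F (q.1, η)) q.2 := by
    rw [← add_zero q.2, ← deriv_comp_const_add]
    simp [lineDeriv, Prod.add_def]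
  simp only [lineDerivTwo, hfirst, iteratedDeriv_succ, iteratedDeriv_zero]
  rw [← add_zero p.2, ← deriv_comp_const_add]
  simp [lineDeriv]

variable {χ : ℝ → ℝ} {α β : ℝ}

lemma contDiff_comp_mul_abs (hχ : ContDiff ℝ ∞ χ) (hα : 0 < α)
    (hsupp : Function.support χ ⊆ Set.Icc α β) (c : ℝ) : ContDiff ℝ ∞ fun u => χ (c * |u|) := by
  refine contDiff_iff_contDiffAt.2 fun u => ?_
  obtain rfl | hu := eq_or_ne u 0
  · refine contDiffAt_const (c := (0 : ℝ)) |>.congr_of_eventuallyEq ?_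
    have hsmall : ∀ᶠ u : ℝ in nhds 0, c * |u| < α :=
      (continuous_const.mul continuous_abs).continuousAt.eventually_lt continuousAt_const
        (by simpa using hα)
    filter_upwards [hsmall] with u hu
    exact Function.notMem_support.1 fun h => hu.not_ge (hsupp h).1
  · exact hχ.contDiffAt.comp u (contDiffAt_const.mul (contDiffAt_abs hu))

lemma isCompact_setOf_mul_abs_mem_Icc {c : ℝ} (hc : 0 < c) (α β : ℝ) :
    IsCompact {u : ℝ | c * |u| ∈ Set.Icc α β} := by
  refine (isCompact_closedBall (0 : ℝ) (β / c)).of_isClosed_subset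
    (isClosed_Icc.preimage (by fun_prop)) fun u hu => ?_
  rw [mem_closedBall_zero_iff, norm_eq_abs, le_div_iff₀' hc]
  exact hu.2

lemma exists_testFunction_eq_cutoff_mul_monomial (hχ : ContDiff ℝ ∞ χ) (hα : 0 < α)
    (hsupp : Function.support χ ⊆ Set.Icc α β) {c₁ c₂ : ℝ} (hc₁ : 0 < c₁) (hc₂ : 0 < c₂)
    (b a : ℕ) : ∃ A : 𝓓(offAxes, ℝ), ∀ p,
      A p = χ (c₁ * |p.1|) * χ (c₂ * |p.2|) * p.1 ^ b * p.2 ^ a := by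
  set f : ℝ × ℝ → ℝ := fun p => χ (c₁ * |p.1|) * χ (c₂ * |p.2|) * p.1 ^ b * p.2 ^ a
  set S : Set (ℝ × ℝ) := {u | c₁ * |u| ∈ Set.Icc α β} ×ˢ {u | c₂ * |u| ∈ Set.Icc α β}
  have hS : IsCompact S :=
    (isCompact_setOf_mul_abs_mem_Icc hc₁ α β).prod (isCompact_setOf_mul_abs_mem_Icc hc₂ α β)
  have hfS : Function.support f ⊆ S := by
    intro p hp
    simp only [f, Function.mem_support, mul_ne_zero_iff] at hp
    exact ⟨hsupp hp.1.1.1, hsupp hp.1.1.2⟩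
  have hne {c u : ℝ} (hu : c * |u| ∈ Set.Icc α β) : u ≠ 0 := by
    rintro rfl
    simp [hα.not_ge] at hu
  refine ⟨⟨f, ?_, .of_support_subset_isCompact hS hfS, ?_⟩, fun p => rfl⟩
  · have hcut (c : ℝ) := contDiff_comp_mul_abs hχ hα hsupp c
    exact ((((hcut c₁).comp contDiff_fst).mul ((hcut c₂).comp contDiff_snd)).mul
      (contDiff_fst.pow b)).mul (contDiff_snd.pow a)
  · exact (closure_minimal hfS hS.isClosed).trans fun p hp => ⟨hne hp.1, hne hp.2⟩

lemma exists_testFunction_dilate_eq_cutoff_mul_monomial (hχ : ContDiff ℝ ∞ χ) (hα : 0 < α)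
    (hsupp : Function.support χ ⊆ Set.Icc α β) {c : ℝ} (hc : 0 < c) (b a : ℕ) :
    ∃ A : 𝓓(offAxes, ℝ), ∀ r > 0, ∀ p : ℝ × ℝ, r ^ (b + a) * A (r⁻¹ • p) =
      χ (r⁻¹ * |p.1|) * χ (c * r⁻¹ * |p.2|) * p.1 ^ b * p.2 ^ a := by
  obtain ⟨A, hA⟩ := exists_testFunction_eq_cutoff_mul_monomial hχ hα hsupp one_pos hc b a
  refine ⟨A, fun r hr p => ?_⟩
  simp only [hA, one_mul, Prod.smul_fst, Prod.smul_snd, smul_eq_mul, abs_mul, abs_inv,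
    abs_of_pos hr, mul_pow, inv_pow, pow_add, mul_assoc]
  field_simp

theorem exists_abs_pow_mul_norm_integral_le {s : ℝ} (hs : 0 < s) (b₁ a n₁ n₂ : ℕ)
    (hχ : ContDiff ℝ ∞ χ) (hα : 0 < α) (hsupp : Function.support χ ⊆ Set.Icc α β)
    {c : ℝ} (hc : 0 < c) :
    ∃ C, ∀ r > 0, ∀ x v : ℝ, |x| ^ n₁ * |v| ^ n₂ *
        ‖∫ p : ℝ × ℝ, (↑(χ (r⁻¹ * |p.1|) * χ (c * r⁻¹ * |p.2|) * p.1 ^ b₁ * p.2 ^ a *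
            iteratedDeriv 2 (fun η => exp (-(Mker s p.1 η))) p.2) : ℂ) *
          Complex.exp (-Complex.I * ((p.1 * x + p.2 * v : ℝ) : ℂ))‖ ≤
      C * r ^ (2 * s + b₁ + a - n₁ - n₂) := by
  obtain ⟨A, hA⟩ := exists_testFunction_dilate_eq_cutoff_mul_monomial hχ hα hsupp hc b₁ a
  obtain ⟨C, hC⟩ := exists_prod_abs_mul_norm_integral_lineDerivTwo_exp_neg_le (μ := volume)
    (contDiffOn_Mker hs.le) (fun p hp => Mker_pos hs p.1 hp.2) (d := 2 * s)
    (fun r hr p => by simp [Mker_mul_mul, abs_of_pos hr]) A (0, 1)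
    (.replicate n₁ (1, 0) ++ .replicate n₂ (0, 1))
  refine ⟨C, fun r hr x v => ?_⟩
  have hint : ∫ p : ℝ × ℝ, (↑(χ (r⁻¹ * |p.1|) * χ (c * r⁻¹ * |p.2|) * p.1 ^ b₁ * p.2 ^ a *
            iteratedDeriv 2 (fun η => exp (-(Mker s p.1 η))) p.2) : ℂ) *
          Complex.exp (-Complex.I * ((p.1 * x + p.2 * v : ℝ) : ℂ)) =
      r ^ (b₁ + a) * ∫ p, ((A (r⁻¹ • p) *
        lineDerivTwo (fun q => exp (-Mker s q.1 q.2)) (0, 1) p : ℝ) : ℂ) *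
          planeWave (x • .fst ℝ ℝ ℝ + v • .snd ℝ ℝ ℝ) p := by
    rw [← integral_const_mul]
    congr 1 with p
    rw [← hA r hr, lineDerivTwo_zero_one]
    simp only [planeWave, add_apply, smul_apply, ContinuousLinearMap.coe_fst',
      ContinuousLinearMap.coe_snd', smul_eq_mul, mul_comm x, mul_comm v]
    push_cast
    ring
  have hbound := hC r hr (x • .fst ℝ ℝ ℝ + v • .snd ℝ ℝ ℝ)
  have hexponent : r ^ (2 * s + b₁ + a - n₁ - n₂) =
      r ^ (b₁ + a) * r ^ (2 * s - (n₁ + n₂)) := by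
    rw [← rpow_natCast, ← rpow_add hr]
    push_cast
    ring_nf
  rw [hint, norm_mul, norm_pow, Complex.norm_real, norm_of_nonneg hr.le, hexponent,
    mul_left_comm, mul_left_comm C]
  refine mul_le_mul_of_nonneg_left ?_ (by positivity)
  simpa using hbound

end LittlewoodPaley

theorem stmt12_general {s : ℝ} (hs : 0 < s) (b₁ a n₁ n₂ : ℕ)
    {χ : ℝ → ℝ} (hχ : ContDiff ℝ ∞ χ) {α β : ℝ} (hα : 0 < α)
    (hsupp : Function.support χ ⊆ Set.Icc α β) (K : ℤ) :
    ∃ C > (0 : ℝ), ∀ m₁ m₂ : ℤ, |m₁ - m₂| ≤ K → ∀ x v : ℝ,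
      |x| ^ n₁ * |v| ^ n₂ *
        ‖∫ p : ℝ × ℝ,
            (↑(χ ((2 : ℝ) ^ (-m₁) * |p.1|) * χ ((2 : ℝ) ^ (-m₂) * |p.2|) *
                p.1 ^ b₁ * p.2 ^ a *
                iteratedDeriv 2 (fun η => exp (-(Mker s p.1 η))) p.2) : ℂ) *
              Complex.exp (-Complex.I * ((p.1 * x + p.2 * v : ℝ) : ℂ))‖
        ≤ C * (2 : ℝ) ^ ((m₁ : ℝ) * (2 * s + b₁ + a - n₁ - n₂)) := by
  choose C hC using fun d : ℤ =>
    exists_abs_pow_mul_norm_integral_le hs b₁ a n₁ n₂ hχ hα hsupp (zpow_pos two_pos d)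
  obtain ⟨M, hM⟩ := ((Finset.Icc (-K) K).image C).exists_le
  refine ⟨max M 1, by positivity, fun m₁ m₂ hm x v => ?_⟩
  have hratio : (2 : ℝ) ^ (m₁ - m₂) * ((2 : ℝ) ^ m₁)⁻¹ = 2 ^ (-m₂) := by
    rw [← zpow_neg, ← zpow_add₀ two_ne_zero]
    congr 1
    ring
  have hbound := hC (m₁ - m₂) (2 ^ m₁) (by positivity) x v
  rw [hratio, ← zpow_neg, ← rpow_intCast _ m₁, ← rpow_mul two_pos.le] at hbound
  have hCM : C (m₁ - m₂) ≤ M :=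
    hM _ (Finset.mem_image_of_mem C (Finset.mem_Icc.2 (abs_le.1 hm)))
  refine hbound.trans ?_
  gcongr
  exact hCM.trans (le_max_left M 1)

theorem stmt12 (s : ℝ) (hs : 0 < s) (hs2 : s ≤ 1 / 2) (b₁ a n₁ n₂ : ℕ)
    (χ : ℝ → ℝ) (hχ : ContDiff ℝ (⊤ : ℕ∞) χ)
    (hsupp : Function.support χ ⊆ Set.Icc (1 / 2 : ℝ) 2) :
    ∃ C > (0:ℝ), ∀ m₁ m₂ : ℤ, |m₁ - m₂| ≤ 2 → ∀ x v : ℝ,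
      |x| ^ n₁ * |v| ^ n₂ *
        ‖∫ p : ℝ × ℝ,
            (↑(χ ((2:ℝ) ^ (-m₁) * |p.1|) * χ ((2:ℝ) ^ (-m₂) * |p.2|) *
                p.1 ^ b₁ * p.2 ^ a *
                iteratedDeriv 2 (fun η => Real.exp (-(Mker s p.1 η))) p.2) : ℂ) *
              Complex.exp (-Complex.I * ((p.1 * x + p.2 * v : ℝ) : ℂ))‖
        ≤ C * (2:ℝ) ^ ((m₁ : ℝ) * (2 * s + b₁ + a - n₁ - n₂)) :=
  stmt12_general hs b₁ a n₁ n₂ hχ (by norm_num) hsupp 2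
end
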